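/- arXiv:0901.1280 — 2 statements merged into one kernel-verified Lean document; each statement's English description precedes it below -/
import Mathlib

section
/- For any mixed ensemble {(p_k, ρ^k_A ⊗ ρ^k_B)} of product states and any n ≥ 1, the mutual information across the A^n : B^n cut of the de Finetti state ∑_k p_k (ρ^k_A ⊗ ρ^k_B)^{⊗n} is at most the Shannon entropy S({p_k}); hence it is bounded uniformly in n. -/
open scoped BigOperators Kronecker ComplexOrder
open Matrix Filter Topology

noncomputable section

/-- Shannon entropy (log base 2) of a finitely supported distribution. -/
def shannon {I : Type} [Fintype I] (p : I → ℝ) : ℝ := -∑ i, p i * Real.logb 2 (p i)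

/-- `p` is a probability distribution. -/
def IsProbDist {I : Type} [Fintype I] (p : I → ℝ) : Prop :=
  (∀ i, 0 ≤ p i) ∧ ∑ i, p i = 1

/-- First marginal of a joint distribution. -/
def margA {I J : Type} [Fintype J] (p : I × J → ℝ) : I → ℝ := fun i => ∑ j, p (i, j)

/-- Second marginal of a joint distribution. -/
def margB {I J : Type} [Fintype I] (p : I × J → ℝ) : J → ℝ := fun j => ∑ i, p (i, j)

/-- Classical mutual information of a joint distribution. -/
def classMI {I J : Type} [Fintype I] [Fintype J] (p : I × J → ℝ) : ℝ :=
  shannon (margA p) + shannon (margB p) - shannon p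

/-- Kullback-Leibler divergence (log base 2). -/
def klDiv {I : Type} [Fintype I] (p q : I → ℝ) : ℝ := ∑ i, p i * Real.logb 2 (p i / q i)

/-- A density operator: positive semidefinite with unit trace. -/
def IsDensity {n : Type} [Fintype n] (ρ : Matrix n n ℂ) : Prop :=
  ρ.PosSemidef ∧ ρ.trace = 1

/-- Von Neumann entropy (log base 2) via the eigenvalues of a Hermitian matrix. -/
def vnEntropy {n : Type} [Fintype n] [DecidableEq n] (ρ : Matrix n n ℂ) : ℝ :=
  if h : ρ.IsHermitian then -∑ i, h.eigenvalues i * Real.logb 2 (h.eigenvalues i) else 0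

/-- Partial trace over the second tensor factor. -/
def ptraceB {A B : Type} [Fintype B] (ρ : Matrix (A × B) (A × B) ℂ) : Matrix A A ℂ :=
  Matrix.of fun a a' => ∑ b, ρ (a, b) (a', b)

/-- Partial trace over the first tensor factor. -/
def ptraceA {A B : Type} [Fintype A] (ρ : Matrix (A × B) (A × B) ℂ) : Matrix B B ℂ :=
  Matrix.of fun b b' => ∑ a, ρ (a, b) (a, b')

/-- Quantum mutual information I(A:B) = S(ρ_A) + S(ρ_B) - S(ρ_{AB}). -/
def mutInfo {A B : Type} [Fintype A] [Fintype B] [DecidableEq A] [DecidableEq B]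
    (ρ : Matrix (A × B) (A × B) ℂ) : ℝ :=
  vnEntropy (ptraceB ρ) + vnEntropy (ptraceA ρ) - vnEntropy ρ

/-- Tensor product of two bipartite states, with the cut (A₁A₂ : B₁B₂). -/
def tens2 {A₁ B₁ A₂ B₂ : Type}
    (ρ : Matrix (A₁ × B₁) (A₁ × B₁) ℂ) (σ : Matrix (A₂ × B₂) (A₂ × B₂) ℂ) :
    Matrix ((A₁ × A₂) × (B₁ × B₂)) ((A₁ × A₂) × (B₁ × B₂)) ℂ :=
  Matrix.of fun x y => ρ (x.1.1, x.2.1) (y.1.1, y.2.1) * σ (x.1.2, x.2.2) (y.1.2, y.2.2)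

/-- n-fold tensor power of a bipartite state, with the A^n : B^n cut. -/
def tpow {A B : Type} (σ : Matrix (A × B) (A × B) ℂ) (n : ℕ) :
    Matrix ((Fin n → A) × (Fin n → B)) ((Fin n → A) × (Fin n → B)) ℂ :=
  Matrix.of fun x y => ∏ i, σ (x.1 i, x.2 i) (y.1 i, y.2 i)

/-- Reduced state of the k-th copy (partial trace over all other copies). -/
def copyMarginal {A B : Type} [Fintype A] [Fintype B] [DecidableEq A] [DecidableEq B] {n : ℕ}
    (ρ : Matrix ((Fin n → A) × (Fin n → B)) ((Fin n → A) × (Fin n → B)) ℂ) (k : Fin n) :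
    Matrix (A × B) (A × B) ℂ :=
  Matrix.of fun x y => ∑ f : Fin n → A, ∑ g : Fin n → B,
    if f k = x.1 ∧ g k = x.2 then
      ρ (f, g) (Function.update f k y.1, Function.update g k y.2) else 0

/-- `τ` is an n-copy broadcast state of `ρ`. -/
def IsBroadcast {A B : Type} [Fintype A] [Fintype B] [DecidableEq A] [DecidableEq B] (n : ℕ)
    (τ : Matrix ((Fin n → A) × (Fin n → B)) ((Fin n → A) × (Fin n → B)) ℂ)
    (ρ : Matrix (A × B) (A × B) ℂ) : Prop :=
  IsDensity τ ∧ ∀ k : Fin n, copyMarginal τ k = ρ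

/-- n-copy broadcast mutual information (I_b)_n. -/
def Ib {A B : Type} [Fintype A] [Fintype B] [DecidableEq A] [DecidableEq B] (n : ℕ)
    (ρ : Matrix (A × B) (A × B) ℂ) : ℝ :=
  sInf {x | ∃ τ, IsBroadcast n τ ρ ∧ x = mutInfo τ}

/-- Partial trace of a state on (A A' : B B') over the primed (ancilla) systems. -/
def ptracePrime {A B A' B' : Type} [Fintype A'] [Fintype B']
    (τ : Matrix ((A × A') × (B × B')) ((A × A') × (B × B')) ℂ) :
    Matrix (A × B) (A × B) ℂ :=
  Matrix.of fun x y => ∑ a', ∑ b', τ ((x.1, a'), (x.2, b')) ((y.1, a'), (y.2, b'))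

/-- Partial trace of a state on (A A' : B B') over the unprimed systems. -/
def ptraceMain {A B A' B' : Type} [Fintype A] [Fintype B]
    (τ : Matrix ((A × A') × (B × B')) ((A × A') × (B × B')) ℂ) :
    Matrix (A' × B') (A' × B') ℂ :=
  Matrix.of fun x y => ∑ a, ∑ b, τ ((a, x.1), (b, x.2)) ((a, y.1), (b, y.2))

/-- Conditional entanglement of mutual information (CEMI). -/
def EI {A B : Type} [Fintype A] [Fintype B] [DecidableEq A] [DecidableEq B]
    (ρ : Matrix (A × B) (A × B) ℂ) : ℝ :=
  (1 / 2) * sInf {x | ∃ (dA dB : ℕ)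
    (τ : Matrix ((A × Fin dA) × (B × Fin dB)) ((A × Fin dA) × (B × Fin dB)) ℂ),
    IsDensity τ ∧ ptracePrime τ = ρ ∧ x = mutInfo τ - mutInfo (ptraceMain τ)}

/-- Classical squashed entanglement, via the ensemble formula. -/
def EsqC {A B : Type} [Fintype A] [Fintype B] [DecidableEq A] [DecidableEq B]
    (ρ : Matrix (A × B) (A × B) ℂ) : ℝ :=
  (1 / 2) * sInf {x | ∃ (m : ℕ) (p : Fin m → ℝ) (σ : Fin m → Matrix (A × B) (A × B) ℂ),
    (∀ k, 0 ≤ p k) ∧ (∑ k, p k = 1) ∧ (∀ k, IsDensity (σ k)) ∧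
    (∑ k, (p k : ℂ) • σ k = ρ) ∧ x = ∑ k, p k * mutInfo (σ k)}

/-- Separability of a bipartite state. -/
def Separable {A B : Type} [Fintype A] [Fintype B]
    (ρ : Matrix (A × B) (A × B) ℂ) : Prop :=
  ∃ (m : ℕ) (p : Fin m → ℝ) (σA : Fin m → Matrix A A ℂ) (σB : Fin m → Matrix B B ℂ),
    (∀ k, 0 ≤ p k) ∧ (∑ k, p k = 1) ∧ (∀ k, IsDensity (σA k) ∧ IsDensity (σB k)) ∧
    ρ = ∑ k, (p k : ℂ) • (σA k ⊗ₖ σB k)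

/-- A finite POVM. -/
def IsPOVM {A ι : Type} [Fintype A] [Fintype ι] [DecidableEq A]
    (M : ι → Matrix A A ℂ) : Prop :=
  (∀ i, (M i).PosSemidef) ∧ ∑ i, M i = 1

/-- Outcome distribution of a local product measurement. -/
def measProb {A B ι κ : Type} [Fintype A] [Fintype B]
    (M : ι → Matrix A A ℂ) (N : κ → Matrix B B ℂ)
    (ρ : Matrix (A × B) (A × B) ℂ) : ι × κ → ℝ :=
  fun x => (((M x.1 ⊗ₖ N x.2) * ρ).trace).re

/-- Completeness condition for a family of Kraus operators. -/
def IsKraus {A A' ι : Type} [Fintype A] [Fintype A'] [Fintype ι] [DecidableEq A]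
    (K : ι → Matrix A' A ℂ) : Prop :=
  ∑ i, (K i)ᴴ * K i = 1

/-- Action of the product channel Λ_A ⊗ Λ_B (given by Kraus operators) on a bipartite state. -/
def localApply {A B A' B' ι κ : Type} [Fintype A] [Fintype B] [Fintype ι] [Fintype κ]
    (K : ι → Matrix A' A ℂ) (L : κ → Matrix B' B ℂ)
    (ρ : Matrix (A × B) (A × B) ℂ) : Matrix (A' × B') (A' × B') ℂ :=
  ∑ i, ∑ j, (K i ⊗ₖ L j) * ρ * (K i ⊗ₖ L j)ᴴ

/-- Measured relative entropy distance to separable states (with optimization over local POVMs). -/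
def measREE {A B : Type} [Fintype A] [Fintype B] [DecidableEq A] [DecidableEq B]
    (ρ : Matrix (A × B) (A × B) ℂ) : ℝ :=
  sInf {x | ∃ σ : Matrix (A × B) (A × B) ℂ, IsDensity σ ∧ Separable σ ∧
    x = sSup {y | ∃ (m m' : ℕ) (M : Fin m → Matrix A A ℂ) (N : Fin m' → Matrix B B ℂ),
      IsPOVM M ∧ IsPOVM N ∧ y = klDiv (measProb M N ρ) (measProb M N σ)}}

/-!
Mutual information is a relative entropy, `I(A:B) = D(ρ ‖ ρ_A ⊗ ρ_B)`. For
`ρ = ∑ k, R k` with `R k = p k • (α k ⊗ β k)`, the operator `ρ_A ⊗ ρ_B` dominates the sum of the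
`p k • R k = (p k • α k) ⊗ (p k • β k)`, so joint convexity of `D` and its antitonicity in the
second argument give `I(A:B) ≤ ∑ k, D(R k ‖ p k • R k) = ∑ k, -p k * log (p k)`. A de Finetti state
is of this form, with tensor powers for `α k` and `β k`.

Convexity and antitonicity come from the relative modular operator `Δ : X ↦ τ X ρ⁻¹`: each
resolvent trace `⟨√ρ, (Δ + t)⁻¹ √ρ⟩` is a maximum of functionals that are linear in `(ρ, τ)` and
antitone in `τ`, and `D(ρ ‖ τ) = -⟨√ρ, log Δ √ρ⟩` inherits every inequality between resolvent traces
that holds for all `t > 0`.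
-/

section LogComparison

variable {ι κ : Type*} [Fintype ι] [Fintype κ] {c x : ι → ℝ} {d y : κ → ℝ}

lemma pos_of_forall_sum_div_add_le (hc : ∀ i, 0 ≤ c i) (hx : ∀ i, 0 ≤ x i) (hd : ∀ k, 0 ≤ d k)
    (hy : ∀ k, d k ≠ 0 → 0 < y k) (h : ∀ t > 0, ∑ i, c i / (x i + t) ≤ ∑ k, d k / (y k + t))
    {i : ι} (hi : c i ≠ 0) : 0 < x i := by
  refine (hx i).lt_of_ne' fun hxi ↦ ?_
  have hci : 0 < c i := (hc i).lt_of_ne' hi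
  have bound (t : ℝ) (ht : 0 < t) : c i / t ≤ ∑ k, d k / y k :=
    calc c i / t = c i / (x i + t) := by rw [hxi, zero_add]
      _ ≤ ∑ j, c j / (x j + t) :=
        Finset.single_le_sum (f := fun j ↦ c j / (x j + t))
          (fun j _ ↦ div_nonneg (hc j) (add_nonneg (hx j) ht.le)) (Finset.mem_univ i)
      _ ≤ ∑ k, d k / (y k + t) := h t ht
      _ ≤ ∑ k, d k / y k := by
        refine Finset.sum_le_sum fun k _ ↦ ?_
        rcases eq_or_ne (d k) 0 with hk | hk
        · simp [hk]
        · exact div_le_div_of_nonneg_left (hd k) (hy k hk) (by linarith)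
  have hM : 0 < ∑ k, d k / y k := (div_pos hci one_pos).trans_le (bound 1 one_pos)
  have := bound (c i / (2 * ∑ k, d k / y k)) (by positivity)
  rw [div_div_cancel₀ hi] at this
  linarith

lemma hasDerivAt_sum_mul_log_add (hx : ∀ i, c i ≠ 0 → 0 < x i) {t : ℝ} (ht : 0 ≤ t) :
    HasDerivAt (fun t ↦ ∑ i, c i * Real.log (x i + t)) (∑ i, c i / (x i + t)) t := by
  refine HasDerivAt.fun_sum fun i _ ↦ ?_
  rcases eq_or_ne (c i) 0 with hi | hi
  · simpa [hi] using hasDerivAt_const t (0 : ℝ)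
  · have hxt : x i + t ≠ 0 := (add_pos_of_pos_of_nonneg (hx i hi) ht).ne'
    simpa [div_eq_mul_inv] using (((hasDerivAt_id t).const_add (x i)).log hxt).const_mul (c i)

lemma tendsto_sum_mul_log_add_sub (c x : ι → ℝ) :
    Tendsto (fun t ↦ ∑ i, c i * Real.log (x i + t) - (∑ i, c i) * Real.log t) atTop (𝓝 0) := by
  have hterm (i : ι) : Tendsto (fun t ↦ c i * (Real.log (t + x i) - Real.log t)) atTop (𝓝 0) := by
    simpa using (Real.tendsto_log_comp_add_sub_log (x i)).const_mul (c i)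
  simpa [mul_sub, Finset.sum_sub_distrib, Finset.sum_mul, add_comm] using
    tendsto_finsetSum Finset.univ fun i _ ↦ hterm i

/- The difference `∑ d log (y + t) - ∑ c log (x + t)` is nondecreasing in `t ≥ 0`, and it vanishes
at infinity because the total weights agree. -/
lemma sum_mul_log_le_of_forall_sum_div_add_le (hx : ∀ i, c i ≠ 0 → 0 < x i)
    (hy : ∀ k, d k ≠ 0 → 0 < y k) (hcd : ∑ i, c i = ∑ k, d k)
    (h : ∀ t > 0, ∑ i, c i / (x i + t) ≤ ∑ k, d k / (y k + t)) :
    ∑ k, d k * Real.log (y k) ≤ ∑ i, c i * Real.log (x i) := by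
  let g (t : ℝ) : ℝ := ∑ k, d k * Real.log (y k + t) - ∑ i, c i * Real.log (x i + t)
  have hg (t : ℝ) (ht : 0 ≤ t) :
      HasDerivAt g (∑ k, d k / (y k + t) - ∑ i, c i / (x i + t)) t :=
    (hasDerivAt_sum_mul_log_add hy ht).sub (hasDerivAt_sum_mul_log_add hx ht)
  have hmono : MonotoneOn g (Set.Ici 0) := by
    refine monotoneOn_of_deriv_nonneg (convex_Ici 0)
      (fun t ht ↦ (hg t ht).continuousAt.continuousWithinAt) ?_ ?_ <;>
      rw [interior_Ici] <;> intro t ht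
    · exact (hg t (Set.mem_Ioi.mp ht).le).differentiableAt.differentiableWithinAt
    · rw [(hg t (Set.mem_Ioi.mp ht).le).deriv]
      exact sub_nonneg.mpr (h t ht)
  have hlim : Tendsto g atTop (𝓝 0) := by
    simpa [g, hcd] using (tendsto_sum_mul_log_add_sub d y).sub (tendsto_sum_mul_log_add_sub c x)
  have hg0 : g 0 ≤ 0 := ge_of_tendsto hlim <| (eventually_ge_atTop 0).mono fun t ht ↦
    hmono Set.self_mem_Ici ht ht
  simpa [g] using hg0

lemma sum_mul_logb_le_of_forall_sum_div_add_le {b : ℝ} (hb : 1 < b)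
    (hx : ∀ i, c i ≠ 0 → 0 < x i) (hy : ∀ k, d k ≠ 0 → 0 < y k) (hcd : ∑ i, c i = ∑ k, d k)
    (h : ∀ t > 0, ∑ i, c i / (x i + t) ≤ ∑ k, d k / (y k + t)) :
    ∑ k, d k * Real.logb b (y k) ≤ ∑ i, c i * Real.logb b (x i) := by
  simp only [Real.logb, ← mul_div_assoc, ← Finset.sum_div]
  exact div_le_div_of_nonneg_right (sum_mul_log_le_of_forall_sum_div_add_le hx hy hcd h)
    (Real.log_pos hb).le

end LogComparison

section Spectral

variable {n : Type*} [Fintype n] [DecidableEq n]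

/-- The Hermitian matrix with eigenvalues `d` along the orthonormal basis formed by the columns of
the unitary matrix `U`. -/
def diagonalIn (U : unitaryGroup n ℂ) (d : n → ℝ) : Matrix n n ℂ :=
  U * diagonal (fun i ↦ (d i : ℂ)) * (U : Matrix n n ℂ)ᴴ

/-- The change-of-basis matrix from the columns of `U` to the columns of `V`: its entries are the
inner products of the columns of `V` with those of `U`. -/
def overlap (V U : unitaryGroup n ℂ) : Matrix n n ℂ := (V : Matrix n n ℂ)ᴴ * U

lemma eq_diagonalIn {M : Matrix n n ℂ} (hM : M.IsHermitian) :
    M = diagonalIn hM.eigenvectorUnitary hM.eigenvalues :=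
  hM.spectral_theorem

lemma conjTranspose_mul_unitary (U : unitaryGroup n ℂ) : (U : Matrix n n ℂ)ᴴ * U = 1 :=
  UnitaryGroup.star_mul_self U

lemma unitary_mul_conjTranspose (U : unitaryGroup n ℂ) :
    (U : Matrix n n ℂ) * (U : Matrix n n ℂ)ᴴ = 1 :=
  Unitary.coe_mul_star_self U

lemma diagonalIn_mul (U : unitaryGroup n ℂ) (d : n → ℝ) :
    diagonalIn U d * U = U * diagonal (fun i ↦ (d i : ℂ)) := by
  rw [diagonalIn, Matrix.mul_assoc, conjTranspose_mul_unitary, Matrix.mul_one]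

lemma conjTranspose_mul_diagonalIn (U : unitaryGroup n ℂ) (d : n → ℝ) :
    (U : Matrix n n ℂ)ᴴ * diagonalIn U d = diagonal (fun i ↦ (d i : ℂ)) * (U : Matrix n n ℂ)ᴴ := by
  rw [diagonalIn, Matrix.mul_assoc, ← Matrix.mul_assoc, conjTranspose_mul_unitary, Matrix.one_mul]

/- The overlap `W` intertwines the two diagonal forms, so `W i j ≠ 0` only where `d j = e i`. -/
lemma diagonalIn_comp_eq_of_eq {U V : unitaryGroup n ℂ} {d e : n → ℝ}
    (h : diagonalIn U d = diagonalIn V e) (f : ℝ → ℝ) :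
    diagonalIn U (f ∘ d) = diagonalIn V (f ∘ e) := by
  have hW : overlap V U * diagonal (fun j ↦ (d j : ℂ)) =
      diagonal (fun i ↦ (e i : ℂ)) * overlap V U := by
    rw [overlap, Matrix.mul_assoc, ← diagonalIn_mul, h, ← Matrix.mul_assoc,
      conjTranspose_mul_diagonalIn, Matrix.mul_assoc]
  have hWf : overlap V U * diagonal (fun j ↦ ((f ∘ d) j : ℂ)) =
      diagonal (fun i ↦ ((f ∘ e) i : ℂ)) * overlap V U := by
    ext i j
    have hij := congrFun₂ hW i j
    rw [Matrix.mul_diagonal, Matrix.diagonal_mul, mul_comm, mul_eq_mul_right_iff] at hij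
    rw [Matrix.mul_diagonal, Matrix.diagonal_mul]
    rcases hij with hde | h0
    · simp [Complex.ofReal_injective hde, mul_comm]
    · simp [h0]
  calc diagonalIn U (f ∘ d)
      = V * (overlap V U * diagonal (fun j ↦ ((f ∘ d) j : ℂ))) * (U : Matrix n n ℂ)ᴴ := by
        simp only [diagonalIn, overlap, ← Matrix.mul_assoc, unitary_mul_conjTranspose,
          Matrix.one_mul]
    _ = diagonalIn V (f ∘ e) := by
        rw [hWf]
        simp only [diagonalIn, overlap, Matrix.mul_assoc, unitary_mul_conjTranspose,
          Matrix.mul_one]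

lemma isHermitian_diagonalIn (U : unitaryGroup n ℂ) (d : n → ℝ) : (diagonalIn U d).IsHermitian :=
  isHermitian_mul_mul_conjTranspose _ (isHermitian_diagonal_of_self_adjoint _ <| by
    ext i; simp)

lemma cfc_diagonalIn (U : unitaryGroup n ℂ) (d : n → ℝ) (f : ℝ → ℝ) :
    cfc f (diagonalIn U d) = diagonalIn U (f ∘ d) := by
  have hM := isHermitian_diagonalIn U d
  rw [hM.cfc_eq]
  exact (diagonalIn_comp_eq_of_eq (eq_diagonalIn hM) f).symm

/-- The diagonal of `M` in the orthonormal basis formed by the columns of `V`: for a state `M`, the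
outcome distribution of the measurement in that basis. -/
def basisProb (V : unitaryGroup n ℂ) (M : Matrix n n ℂ) (i : n) : ℝ :=
  (((V : Matrix n n ℂ)ᴴ * M * (V : Matrix n n ℂ)) i i).re

lemma re_trace_mul_diagonalIn (M : Matrix n n ℂ) (V : unitaryGroup n ℂ) (d : n → ℝ) :
    (M * diagonalIn V d).trace.re = ∑ i, basisProb V M i * d i := by
  rw [diagonalIn, ← Matrix.mul_assoc, Matrix.trace_mul_comm, ← Matrix.mul_assoc,
    ← Matrix.mul_assoc]
  simp only [Matrix.trace, Matrix.diag_apply, Matrix.mul_diagonal, Complex.re_sum,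
    Complex.re_mul_ofReal, basisProb]

lemma basisProb_diagonalIn (U V : unitaryGroup n ℂ) (d : n → ℝ) (i : n) :
    basisProb V (diagonalIn U d) i = ∑ j, Complex.normSq (overlap V U i j) * d j := by
  have hW : (V : Matrix n n ℂ)ᴴ * diagonalIn U d * (V : Matrix n n ℂ) =
      overlap V U * diagonal (fun j ↦ (d j : ℂ)) * (overlap V U)ᴴ := by
    simp only [diagonalIn, overlap, conjTranspose_mul, conjTranspose_conjTranspose,
      Matrix.mul_assoc]
  rw [basisProb, hW, Matrix.mul_apply, Complex.re_sum]
  refine Finset.sum_congr rfl fun j _ ↦ ?_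
  rw [Matrix.mul_diagonal, conjTranspose_apply, RCLike.star_def, mul_right_comm,
    Complex.mul_conj, ← Complex.ofReal_mul, Complex.ofReal_re]

lemma basisProb_diagonalIn_self (U : unitaryGroup n ℂ) (d : n → ℝ) :
    basisProb U (diagonalIn U d) = d := by
  ext i
  rw [basisProb, conjTranspose_mul_diagonalIn, Matrix.mul_assoc, conjTranspose_mul_unitary,
    Matrix.mul_one, diagonal_apply_eq, Complex.ofReal_re]

lemma basisProb_nonneg {M : Matrix n n ℂ} (hM : M.PosSemidef) (V : unitaryGroup n ℂ) (i : n) :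
    0 ≤ basisProb V M i :=
  (Complex.le_def.mp (hM.conjTranspose_mul_mul_same _).diag_nonneg).1

lemma re_trace_diagonalIn_mul_diagonalIn (U V : unitaryGroup n ℂ) (d e : n → ℝ) :
    (diagonalIn U d * diagonalIn V e).trace.re =
      ∑ i, ∑ j, Complex.normSq (overlap V U i j) * d j * e i := by
  simp only [re_trace_mul_diagonalIn, basisProb_diagonalIn, Finset.sum_mul]

lemma sum_normSq_overlap (U V : unitaryGroup n ℂ) (j : n) :
    ∑ i, Complex.normSq (overlap V U i j) = 1 := by
  have hW : (overlap V U)ᴴ * overlap V U = 1 :=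
    UnitaryGroup.star_mul_self (star V * U)
  have hjj := congrFun₂ hW j j
  rw [Matrix.mul_apply, Matrix.one_apply_eq] at hjj
  simp only [conjTranspose_apply, RCLike.star_def, ← Complex.normSq_eq_conj_mul_self] at hjj
  exact_mod_cast hjj

lemma re_trace_diagonalIn (U : unitaryGroup n ℂ) (d : n → ℝ) :
    (diagonalIn U d).trace.re = ∑ i, d i := by
  rw [diagonalIn, Matrix.trace_mul_cycle, conjTranspose_mul_unitary]
  simp

end Spectral

section ResolventForm

variable {n : Type*} [Fintype n]

/-- The quadratic functional of `X` whose maximum is the resolvent trace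
`⟨√ρ, (Δ + t)⁻¹ √ρ⟩` of the relative modular operator `Δ = τ ⊗ ρ⁻¹`. It is real-linear in the pair
`(ρ, τ)`, which makes the maximum jointly convex. -/
def resolventForm (t : ℝ) (ρ τ X : Matrix n n ℂ) : ℝ :=
  2 * (ρ * X).trace.re - (Xᴴ * τ * X).trace.re - t * (X * ρ * Xᴴ).trace.re

lemma resolventForm_sum {K : Type*} [Fintype K] (t : ℝ) (R T : K → Matrix n n ℂ)
    (X : Matrix n n ℂ) :
    resolventForm t (∑ k, R k) (∑ k, T k) X = ∑ k, resolventForm t (R k) (T k) X := by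
  simp only [resolventForm, Matrix.sum_mul, Matrix.trace_sum, Complex.re_sum,
    Finset.mul_sum, Finset.sum_sub_distrib]

open scoped MatrixOrder in
lemma resolventForm_anti_right (t : ℝ) (ρ : Matrix n n ℂ) {τ τ' : Matrix n n ℂ} (h : τ ≤ τ')
    (X : Matrix n n ℂ) : resolventForm t ρ τ' X ≤ resolventForm t ρ τ X := by
  have hX : 0 ≤ (Xᴴ * (τ' - τ) * X).trace.re :=
    (Complex.le_def.mp ((Matrix.le_iff.mp h).conjTranspose_mul_mul_same X).trace_nonneg).1
  rw [Matrix.mul_sub, Matrix.sub_mul, Matrix.trace_sub, Complex.sub_re] at hX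
  unfold resolventForm
  linarith

variable [DecidableEq n]

lemma re_trace_conjTranspose_mul_diagonal_mul (Y : Matrix n n ℂ) (d : n → ℝ) :
    (Yᴴ * diagonal (fun i ↦ (d i : ℂ)) * Y).trace.re =
      ∑ i, ∑ j, d i * Complex.normSq (Y i j) := by
  rw [Finset.sum_comm, Matrix.trace, Complex.re_sum]
  refine Finset.sum_congr rfl fun j _ ↦ ?_
  rw [Matrix.diag_apply, Matrix.mul_apply, Complex.re_sum]
  refine Finset.sum_congr rfl fun i _ ↦ ?_
  rw [Matrix.mul_diagonal, conjTranspose_apply, RCLike.star_def, mul_right_comm,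
    ← Complex.normSq_eq_conj_mul_self, ← Complex.ofReal_mul, Complex.ofReal_re, mul_comm]

lemma re_trace_diagonalIn_mul (U V : unitaryGroup n ℂ) (r : n → ℝ) (Y : Matrix n n ℂ) :
    (diagonalIn U r * ((V : Matrix n n ℂ) * Y * (U : Matrix n n ℂ)ᴴ)).trace.re =
      ∑ i, ∑ j, r j * (star (overlap V U i j) * Y i j).re := by
  have hdiag : (diagonalIn U r * ((V : Matrix n n ℂ) * Y * (U : Matrix n n ℂ)ᴴ)).trace =
      (diagonal (fun j ↦ (r j : ℂ)) * ((overlap V U)ᴴ * Y)).trace := by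
    rw [← Matrix.mul_assoc, Matrix.trace_mul_comm, ← Matrix.mul_assoc,
      conjTranspose_mul_diagonalIn]
    simp only [overlap, conjTranspose_mul, conjTranspose_conjTranspose, Matrix.mul_assoc]
  rw [hdiag, Finset.sum_comm, Matrix.trace, Complex.re_sum]
  refine Finset.sum_congr rfl fun j _ ↦ ?_
  rw [Matrix.diag_apply, Matrix.diagonal_mul, Matrix.mul_apply, Complex.re_ofReal_mul,
    Complex.re_sum, Finset.mul_sum]
  rfl

lemma re_trace_conjTranspose_mul_diagonalIn_mul (U V : unitaryGroup n ℂ) (s : n → ℝ)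
    (Y : Matrix n n ℂ) :
    (((V : Matrix n n ℂ) * Y * (U : Matrix n n ℂ)ᴴ)ᴴ * diagonalIn V s *
      ((V : Matrix n n ℂ) * Y * (U : Matrix n n ℂ)ᴴ)).trace.re =
      ∑ i, ∑ j, s i * Complex.normSq (Y i j) := by
  have hconj : ((V : Matrix n n ℂ) * Y * (U : Matrix n n ℂ)ᴴ)ᴴ * diagonalIn V s *
      ((V : Matrix n n ℂ) * Y * (U : Matrix n n ℂ)ᴴ) =
      U * (Yᴴ * diagonal (fun i ↦ (s i : ℂ)) * Y) * (U : Matrix n n ℂ)ᴴ := by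
    calc _ = U * (Yᴴ * ((V : Matrix n n ℂ)ᴴ * diagonalIn V s * V) * Y) * (U : Matrix n n ℂ)ᴴ := by
          simp only [conjTranspose_mul, conjTranspose_conjTranspose, Matrix.mul_assoc]
      _ = _ := by
          rw [conjTranspose_mul_diagonalIn, Matrix.mul_assoc (diagonal _),
            conjTranspose_mul_unitary, Matrix.mul_one]
  rw [hconj, Matrix.trace_mul_cycle, conjTranspose_mul_unitary, Matrix.one_mul,
    re_trace_conjTranspose_mul_diagonal_mul]

/- In the eigenbases of `ρ` and `τ` the functional decouples into one quadratic per entry of `Y`. -/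
lemma resolventForm_diagonalIn (t : ℝ) (U V : unitaryGroup n ℂ) (r s : n → ℝ)
    (Y : Matrix n n ℂ) :
    resolventForm t (diagonalIn U r) (diagonalIn V s)
        ((V : Matrix n n ℂ) * Y * (U : Matrix n n ℂ)ᴴ) =
      ∑ i, ∑ j, (2 * (r j * (star (overlap V U i j) * Y i j).re) -
        (s i + t * r j) * Complex.normSq (Y i j)) := by
  have hright : (((V : Matrix n n ℂ) * Y * (U : Matrix n n ℂ)ᴴ) * diagonalIn U r *
      ((V : Matrix n n ℂ) * Y * (U : Matrix n n ℂ)ᴴ)ᴴ).trace.re =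
      ∑ i, ∑ j, r j * Complex.normSq (Y i j) := by
    have := re_trace_conjTranspose_mul_diagonalIn_mul V U r Yᴴ
    rw [Finset.sum_comm]
    simpa only [conjTranspose_mul, conjTranspose_conjTranspose, conjTranspose_apply,
      RCLike.star_def, Complex.normSq_conj, Matrix.mul_assoc] using this
  rw [resolventForm, re_trace_diagonalIn_mul, re_trace_conjTranspose_mul_diagonalIn_mul, hright]
  simp only [Finset.mul_sum, ← Finset.sum_sub_distrib]
  exact Finset.sum_congr rfl fun i _ ↦ Finset.sum_congr rfl fun j _ ↦ by ring

lemma two_mul_re_star_mul_sub_le {D : ℝ} (hD : 0 < D) (r : ℝ) (w y : ℂ) :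
    2 * (r * (star w * y).re) - D * Complex.normSq y ≤ Complex.normSq w * (r ^ 2 / D) := by
  have hsq := Complex.normSq_nonneg (D * y - r * w)
  rw [← mul_div_assoc, le_div_iff₀ hD]
  simp [Complex.normSq_apply] at hsq ⊢
  nlinarith

lemma two_mul_re_star_mul_sub_eq {D : ℝ} (hD : D ≠ 0) (r : ℝ) (w : ℂ) :
    2 * (r * (star w * (((r / D : ℝ) : ℂ) * w)).re) -
      D * Complex.normSq (((r / D : ℝ) : ℂ) * w) = Complex.normSq w * (r ^ 2 / D) := by
  rw [mul_left_comm (star w), Complex.re_ofReal_mul, RCLike.star_def,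
    ← Complex.normSq_eq_conj_mul_self, Complex.ofReal_re, Complex.normSq_mul, Complex.normSq_ofReal]
  field_simp
  ring

end ResolventForm

section ModularSpectrum

variable {n : Type*} [Fintype n] [DecidableEq n]

/-- The spectral weights of the vector `√ρ` with respect to the relative modular operator of
`τ = diagonalIn V s` and `ρ = diagonalIn U r`, in the joint eigenbasis indexed by `n × n`. The
corresponding eigenvalues are `modularRatio s r`. -/
def modularWeight (V U : unitaryGroup n ℂ) (r : n → ℝ) (x : n × n) : ℝ :=
  Complex.normSq (overlap V U x.1 x.2) * r x.2

/-- The eigenvalues of the relative modular operator `X ↦ τ X ρ⁻¹`, where `s` and `r` are the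
eigenvalues of `τ` and `ρ`. Where `r` vanishes the value is `0`, but so is the `modularWeight`. -/
def modularRatio {n : Type*} (s r : n → ℝ) (x : n × n) : ℝ := s x.1 / r x.2

variable {V U : unitaryGroup n ℂ} {s r : n → ℝ}

lemma modularWeight_nonneg (hr : 0 ≤ r) (x : n × n) : 0 ≤ modularWeight V U r x :=
  mul_nonneg (Complex.normSq_nonneg _) (hr _)

omit [Fintype n] [DecidableEq n] in
lemma modularRatio_nonneg (hs : 0 ≤ s) (hr : 0 ≤ r) (x : n × n) : 0 ≤ modularRatio s r x :=
  div_nonneg (hs _) (hr _)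

lemma sum_modularWeight (V U : unitaryGroup n ℂ) (r : n → ℝ) :
    ∑ x, modularWeight V U r x = (diagonalIn U r).trace.re := by
  simp_rw [modularWeight, Fintype.sum_prod_type_right, ← Finset.sum_mul, sum_normSq_overlap,
    one_mul, re_trace_diagonalIn]

lemma pos_modularRatio (hs : 0 ≤ s) (hr : 0 ≤ r)
    (hker : ∀ v, diagonalIn V s *ᵥ v = 0 → diagonalIn U r *ᵥ v = 0) (x : n × n)
    (hx : modularWeight V U r x ≠ 0) : 0 < modularRatio s r x := by
  obtain ⟨i, j⟩ := x
  have hrj : 0 < r j := (hr j).lt_of_ne' (right_ne_zero_of_mul hx)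
  refine div_pos ((hs i).lt_of_ne' fun hsi ↦ hx ?_) hrj
  have hτv : diagonalIn V s *ᵥ (V : Matrix n n ℂ).col i = 0 := by
    ext l
    change (diagonalIn V s * (V : Matrix n n ℂ)) l i = 0
    rw [diagonalIn_mul, Matrix.mul_diagonal]
    simp [hsi]
  have hdiag : basisProb V (diagonalIn U r) i = 0 := by
    rw [basisProb, Matrix.mul_assoc, Matrix.mul_apply, Finset.sum_eq_zero, Complex.zero_re]
    exact fun l _ ↦ mul_eq_zero_of_right _ (congrFun (hker _ hτv) l)
  rw [basisProb_diagonalIn] at hdiag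
  exact (Finset.sum_eq_zero_iff_of_nonneg fun l _ ↦ modularWeight_nonneg hr (i, l)).mp hdiag j
    (Finset.mem_univ j)

lemma normSq_mul_sq_div_eq_modularWeight_div (V U : unitaryGroup n ℂ) (s r : n → ℝ) (t : ℝ)
    (i j : n) :
    Complex.normSq (overlap V U i j) * (r j ^ 2 / (s i + t * r j)) =
      modularWeight V U r (i, j) / (modularRatio s r (i, j) + t) := by
  rcases eq_or_ne (r j) 0 with hj | hj
  · simp [modularWeight, hj]
  · rw [modularWeight, modularRatio, div_add' _ _ _ hj, div_div_eq_mul_div]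
    ring

theorem isGreatest_resolventForm (hs : 0 ≤ s) (hr : 0 ≤ r) {t : ℝ} (ht : 0 < t) :
    IsGreatest (Set.range (resolventForm t (diagonalIn U r) (diagonalIn V s)))
      (∑ x, modularWeight V U r x / (modularRatio s r x + t)) := by
  simp_rw [Fintype.sum_prod_type, ← normSq_mul_sq_div_eq_modularWeight_div]
  have hden (i j : n) (hj : r j ≠ 0) : 0 < s i + t * r j :=
    add_pos_of_nonneg_of_pos (hs i) (mul_pos ht ((hr j).lt_of_ne' hj))
  constructor
  · let Y : Matrix n n ℂ := of fun i j ↦ ((r j / (s i + t * r j) : ℝ) : ℂ) * overlap V U i j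
    refine ⟨V * Y * (U : Matrix n n ℂ)ᴴ, ?_⟩
    rw [resolventForm_diagonalIn]
    refine Finset.sum_congr rfl fun i _ ↦ Finset.sum_congr rfl fun j _ ↦ ?_
    rcases eq_or_ne (r j) 0 with hj | hj
    · simp [Y, hj]
    · exact two_mul_re_star_mul_sub_eq (hden i j hj).ne' _ _
  · rintro _ ⟨X, rfl⟩
    have hX : X = V * ((V : Matrix n n ℂ)ᴴ * X * U) * (U : Matrix n n ℂ)ᴴ := by
      simp only [Matrix.mul_assoc, unitary_mul_conjTranspose, Matrix.mul_one]
      rw [← Matrix.mul_assoc, unitary_mul_conjTranspose, Matrix.one_mul]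
    rw [hX, resolventForm_diagonalIn]
    refine Finset.sum_le_sum fun i _ ↦ Finset.sum_le_sum fun j _ ↦ ?_
    rcases eq_or_ne (r j) 0 with hj | hj
    · simpa [hj] using mul_nonneg (hs i) (Complex.normSq_nonneg _)
    · exact two_mul_re_star_mul_sub_le (hden i j hj) _ _ _

open scoped MatrixOrder in
lemma sum_modularWeight_div_le {K : Type*} [Fintype K] {Uk Vk : K → unitaryGroup n ℂ}
    {rk sk : K → n → ℝ} (hs : 0 ≤ s) (hr : 0 ≤ r) (hsk : ∀ k, 0 ≤ sk k) (hrk : ∀ k, 0 ≤ rk k)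
    (hρ : ∑ k, diagonalIn (Uk k) (rk k) = diagonalIn U r)
    (hle : ∑ k, diagonalIn (Vk k) (sk k) ≤ diagonalIn V s) {t : ℝ} (ht : 0 < t) :
    ∑ x, modularWeight V U r x / (modularRatio s r x + t) ≤
      ∑ k, ∑ x, modularWeight (Vk k) (Uk k) (rk k) x / (modularRatio (sk k) (rk k) x + t) := by
  obtain ⟨X, hX⟩ := (isGreatest_resolventForm (U := U) (V := V) hs hr ht).1
  calc ∑ x, modularWeight V U r x / (modularRatio s r x + t)
      = resolventForm t (∑ k, diagonalIn (Uk k) (rk k)) (diagonalIn V s) X := by rw [← hX, hρ]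
    _ ≤ resolventForm t (∑ k, diagonalIn (Uk k) (rk k)) (∑ k, diagonalIn (Vk k) (sk k)) X :=
        resolventForm_anti_right t _ hle X
    _ = ∑ k, resolventForm t (diagonalIn (Uk k) (rk k)) (diagonalIn (Vk k) (sk k)) X :=
        resolventForm_sum t _ _ X
    _ ≤ _ := Finset.sum_le_sum fun k _ ↦
        (isGreatest_resolventForm (hsk k) (hrk k) ht).2 (Set.mem_range_self X)

end ModularSpectrum

section RelativeEntropy

variable {n : Type*} [Fintype n] [DecidableEq n]

/-- Quantum relative entropy `D(ρ‖τ)` (log base 2). As `logb 2 0 = 0`, the value is the usual one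
only when the kernel of `τ` is contained in that of `ρ`. -/
def relEntropy (ρ τ : Matrix n n ℂ) : ℝ :=
  (ρ * (cfc (Real.logb 2) ρ - cfc (Real.logb 2) τ)).trace.re

lemma diagonalIn_mul_diagonalIn (U : unitaryGroup n ℂ) (d e : n → ℝ) :
    diagonalIn U d * diagonalIn U e = diagonalIn U (d * e) := by
  rw [diagonalIn, Matrix.mul_assoc, conjTranspose_mul_diagonalIn, ← Matrix.mul_assoc,
    Matrix.mul_assoc (U : Matrix n n ℂ), diagonal_mul_diagonal]
  simp [diagonalIn]

lemma relEntropy_diagonalIn {V U : unitaryGroup n ℂ} {s r : n → ℝ}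
    (h : ∀ x, modularWeight V U r x ≠ 0 → 0 < modularRatio s r x) :
    relEntropy (diagonalIn U r) (diagonalIn V s) =
      -∑ x, modularWeight V U r x * Real.logb 2 (modularRatio s r x) := by
  have hρ : (diagonalIn U r * cfc (Real.logb 2) (diagonalIn U r)).trace.re =
      ∑ x, modularWeight V U r x * Real.logb 2 (r x.2) := by
    rw [cfc_diagonalIn, diagonalIn_mul_diagonalIn, ← sum_modularWeight V]
    exact Finset.sum_congr rfl fun x _ ↦ (mul_assoc _ _ _).symm
  have hτ : (diagonalIn U r * cfc (Real.logb 2) (diagonalIn V s)).trace.re =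
      ∑ x, modularWeight V U r x * Real.logb 2 (s x.1) := by
    rw [cfc_diagonalIn, re_trace_diagonalIn_mul_diagonalIn, Fintype.sum_prod_type]
    rfl
  rw [relEntropy, Matrix.mul_sub, Matrix.trace_sub, Complex.sub_re, hρ, hτ,
    ← Finset.sum_sub_distrib, ← Finset.sum_neg_distrib]
  refine Finset.sum_congr rfl fun x _ ↦ ?_
  rcases eq_or_ne (modularWeight V U r x) 0 with hx | hx
  · simp [hx]
  · obtain ⟨hs, hr⟩ := div_ne_zero_iff.mp (h x hx).ne'
    rw [modularRatio, Real.logb_div hs hr]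
    ring

lemma exists_eq_diagonalIn {M : Matrix n n ℂ} (hM : M.PosSemidef) :
    ∃ (U : unitaryGroup n ℂ) (d : n → ℝ), 0 ≤ d ∧ M = diagonalIn U d :=
  ⟨_, _, hM.eigenvalues_nonneg, eq_diagonalIn hM.isHermitian⟩

/- Joint convexity and antitonicity in the second argument, at once: the resolvent traces of the
relative modular operators are maxima of functionals with both properties, and their comparison for
all `t > 0` passes to the logarithm. -/
open scoped MatrixOrder in
theorem relEntropy_sum_le {K : Type*} [Fintype K] {R T : K → Matrix n n ℂ} {τ : Matrix n n ℂ}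
    (hR : ∀ k, (R k).PosSemidef) (hT : ∀ k, (T k).PosSemidef) (hτ : τ.PosSemidef)
    (hker : ∀ k v, T k *ᵥ v = 0 → R k *ᵥ v = 0) (hle : ∑ k, T k ≤ τ) :
    relEntropy (∑ k, R k) τ ≤ ∑ k, relEntropy (R k) (T k) := by
  obtain ⟨U, r, hr, hρ⟩ := exists_eq_diagonalIn (posSemidef_sum Finset.univ fun k _ ↦ hR k)
  obtain ⟨V, s, hs, rfl⟩ := exists_eq_diagonalIn hτ
  choose Uk rk hrk hRk using fun k ↦ exists_eq_diagonalIn (hR k)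
  choose Vk sk hsk hTk using fun k ↦ exists_eq_diagonalIn (hT k)
  obtain rfl : R = fun k ↦ diagonalIn (Uk k) (rk k) := funext hRk
  obtain rfl : T = fun k ↦ diagonalIn (Vk k) (sk k) := funext hTk
  let w (y : K × n × n) : ℝ := modularWeight (Vk y.1) (Uk y.1) (rk y.1) y.2
  let q (y : K × n × n) : ℝ := modularRatio (sk y.1) (rk y.1) y.2
  have hposk (k : K) := pos_modularRatio (hsk k) (hrk k) (hker k)
  have hw (y : K × n × n) : 0 ≤ w y := modularWeight_nonneg (hrk y.1) y.2
  have hq (y : K × n × n) (hy : w y ≠ 0) : 0 < q y := hposk y.1 y.2 hy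
  have hres (t : ℝ) (ht : 0 < t) :
      ∑ x, modularWeight V U r x / (modularRatio s r x + t) ≤ ∑ y, w y / (q y + t) :=
    (sum_modularWeight_div_le hs hr hsk hrk hρ hle ht).trans_eq
      (Fintype.sum_prod_type fun y ↦ w y / (q y + t)).symm
  have hweight : ∑ x, modularWeight V U r x = ∑ y, w y := by
    rw [sum_modularWeight, Fintype.sum_prod_type, ← hρ, Matrix.trace_sum, Complex.re_sum]
    exact Finset.sum_congr rfl fun k _ ↦ (sum_modularWeight (Vk k) (Uk k) (rk k)).symm
  have hpos (x : n × n) (hx : modularWeight V U r x ≠ 0) : 0 < modularRatio s r x :=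
    pos_of_forall_sum_div_add_le (modularWeight_nonneg hr) (modularRatio_nonneg hs hr)
      hw hq hres hx
  calc relEntropy (∑ k, diagonalIn (Uk k) (rk k)) (diagonalIn V s)
      = -∑ x, modularWeight V U r x * Real.logb 2 (modularRatio s r x) := by
        rw [hρ, relEntropy_diagonalIn hpos]
    _ ≤ -∑ y, w y * Real.logb 2 (q y) :=
        neg_le_neg <| sum_mul_logb_le_of_forall_sum_div_add_le one_lt_two hpos hq hweight hres
    _ = ∑ k, relEntropy (diagonalIn (Uk k) (rk k)) (diagonalIn (Vk k) (sk k)) := by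
        rw [Fintype.sum_prod_type, ← Finset.sum_neg_distrib]
        exact Finset.sum_congr rfl fun k _ ↦ (relEntropy_diagonalIn (hposk k)).symm

end RelativeEntropy

section Entropy

variable {n : Type} [Fintype n] [DecidableEq n]

lemma vnEntropy_eq_neg_re_trace {ρ : Matrix n n ℂ} (hρ : ρ.IsHermitian) :
    vnEntropy ρ = -(ρ * cfc (Real.logb 2) ρ).trace.re := by
  have hmul : ρ * cfc (Real.logb 2) ρ = diagonalIn hρ.eigenvectorUnitary
      (hρ.eigenvalues * (Real.logb 2 ∘ hρ.eigenvalues)) := by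
    rw [← diagonalIn_mul_diagonalIn, ← eq_diagonalIn, hρ.cfc_eq]
    rfl
  rw [vnEntropy, dif_pos hρ, hmul, re_trace_diagonalIn]
  rfl

lemma vnEntropy_diagonalIn (U : unitaryGroup n ℂ) (d : n → ℝ) :
    vnEntropy (diagonalIn U d) = shannon d := by
  rw [vnEntropy_eq_neg_re_trace (isHermitian_diagonalIn U d), cfc_diagonalIn,
    diagonalIn_mul_diagonalIn, re_trace_diagonalIn]
  rfl

end Entropy

section PartialTrace

variable {A B : Type}

lemma posSemidef_ptraceB [Fintype B] {ρ : Matrix (A × B) (A × B) ℂ} (hρ : ρ.PosSemidef) :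
    (ptraceB ρ).PosSemidef := by
  have hsum : ptraceB ρ = ∑ b, ρ.submatrix (·, b) (·, b) := by
    ext a a'
    simp [ptraceB, Matrix.sum_apply]
  rw [hsum]
  exact posSemidef_sum _ fun b _ ↦ hρ.submatrix _

lemma posSemidef_ptraceA [Fintype A] {ρ : Matrix (A × B) (A × B) ℂ} (hρ : ρ.PosSemidef) :
    (ptraceA ρ).PosSemidef := by
  have hsum : ptraceA ρ = ∑ a, ρ.submatrix (a, ·) (a, ·) := by
    ext b b'
    simp [ptraceA, Matrix.sum_apply]
  rw [hsum]
  exact posSemidef_sum _ fun a _ ↦ hρ.submatrix _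

variable [Fintype A] [Fintype B]

lemma trace_mul_kronecker_one [DecidableEq B] (ρ : Matrix (A × B) (A × B) ℂ) (N : Matrix A A ℂ) :
    (ρ * (N ⊗ₖ (1 : Matrix B B ℂ))).trace = (ptraceB ρ * N).trace := by
  simp only [Matrix.trace, Matrix.diag_apply, Matrix.mul_apply, Fintype.sum_prod_type,
    kroneckerMap_apply, Matrix.one_apply, mul_ite, mul_one, mul_zero, Finset.sum_ite_eq',
    Finset.mem_univ, if_true, ptraceB, of_apply, Finset.sum_mul]
  exact Finset.sum_congr rfl fun a _ ↦ Finset.sum_comm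

lemma trace_mul_one_kronecker [DecidableEq A] (ρ : Matrix (A × B) (A × B) ℂ) (N : Matrix B B ℂ) :
    (ρ * ((1 : Matrix A A ℂ) ⊗ₖ N)).trace = (ptraceA ρ * N).trace := by
  simp only [Matrix.trace, Matrix.diag_apply, Matrix.mul_apply, Fintype.sum_prod_type_right,
    kroneckerMap_apply, Matrix.one_apply, ite_mul, one_mul, zero_mul, mul_ite, mul_zero,
    Finset.sum_ite_eq', Finset.mem_univ, if_true, ptraceA, of_apply, Finset.sum_mul]
  exact Finset.sum_congr rfl fun b _ ↦ Finset.sum_comm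

variable [DecidableEq A] [DecidableEq B]

/-- The unitary matrix `U ⊗ V`, whose columns are the tensor products of the columns of `U` with
those of `V`. -/
def kroneckerUnitary (U : unitaryGroup A ℂ) (V : unitaryGroup B ℂ) : unitaryGroup (A × B) ℂ :=
  ⟨(U : Matrix A A ℂ) ⊗ₖ (V : Matrix B B ℂ), kronecker_mem_unitary U.2 V.2⟩

lemma diagonalIn_kronecker (U : unitaryGroup A ℂ) (V : unitaryGroup B ℂ) (a : A → ℝ)
    (b : B → ℝ) :
    diagonalIn U a ⊗ₖ diagonalIn V b = diagonalIn (kroneckerUnitary U V) fun x ↦ a x.1 * b x.2 := by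
  simp only [diagonalIn, kroneckerUnitary, conjTranspose_kronecker, Matrix.mul_kronecker_mul,
    diagonal_kronecker_diagonal, Complex.ofReal_mul]

lemma diagonalIn_one (U : unitaryGroup A ℂ) : diagonalIn U 1 = 1 := by
  simp [diagonalIn, unitary_mul_conjTranspose]

lemma margA_basisProb_kroneckerUnitary (U : unitaryGroup A ℂ) (V : unitaryGroup B ℂ)
    (ρ : Matrix (A × B) (A × B) ℂ) :
    margA (basisProb (kroneckerUnitary U V) ρ) = basisProb U (ptraceB ρ) := by
  ext i
  have h := congrArg Complex.re (trace_mul_kronecker_one ρ (diagonalIn U (Pi.single i 1)))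
  rw [← diagonalIn_one V, diagonalIn_kronecker, re_trace_mul_diagonalIn, re_trace_mul_diagonalIn,
    Fintype.sum_prod_type] at h
  simpa [margA, Pi.single_apply] using h

lemma margB_basisProb_kroneckerUnitary (U : unitaryGroup A ℂ) (V : unitaryGroup B ℂ)
    (ρ : Matrix (A × B) (A × B) ℂ) :
    margB (basisProb (kroneckerUnitary U V) ρ) = basisProb V (ptraceA ρ) := by
  ext j
  have h := congrArg Complex.re (trace_mul_one_kronecker ρ (diagonalIn V (Pi.single j 1)))
  rw [← diagonalIn_one U, diagonalIn_kronecker, re_trace_mul_diagonalIn, re_trace_mul_diagonalIn,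
    Fintype.sum_prod_type_right] at h
  simpa [margB, Pi.single_apply] using h

end PartialTrace

section MutualInformation

variable {A B : Type} [Fintype A] [Fintype B]

lemma shannon_margA_add_shannon_margB {q : A × B → ℝ} (hq : 0 ≤ q) :
    shannon (margA q) + shannon (margB q) =
      -∑ x, q x * Real.logb 2 (margA q x.1 * margB q x.2) := by
  have hA : ∑ i, margA q i * Real.logb 2 (margA q i) = ∑ x, q x * Real.logb 2 (margA q x.1) := by
    simp only [Fintype.sum_prod_type, ← Finset.sum_mul, margA]
  have hB : ∑ j, margB q j * Real.logb 2 (margB q j) = ∑ x, q x * Real.logb 2 (margB q x.2) := by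
    simp only [Fintype.sum_prod_type_right, ← Finset.sum_mul, margB]
  rw [shannon, shannon, hA, hB, ← neg_add, ← Finset.sum_add_distrib]
  refine congrArg _ (Finset.sum_congr rfl fun x _ ↦ ?_)
  rcases eq_or_ne (q x) 0 with hx | hx
  · simp [hx]
  · have hpos : 0 < q x := (hq x).lt_of_ne' hx
    have hAx : q x ≤ margA q x.1 :=
      Finset.single_le_sum (f := fun j ↦ q (x.1, j)) (fun j _ ↦ hq _) (Finset.mem_univ x.2)
    have hBx : q x ≤ margB q x.2 :=
      Finset.single_le_sum (f := fun i ↦ q (i, x.2)) (fun i _ ↦ hq _) (Finset.mem_univ x.1)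
    rw [Real.logb_mul (hpos.trans_le hAx).ne' (hpos.trans_le hBx).ne', mul_add]

/- Measuring `ρ` in the product eigenbasis of its marginals reduces the entropies of the marginals
to the classical case. -/
theorem mutInfo_eq_relEntropy [DecidableEq A] [DecidableEq B] {ρ : Matrix (A × B) (A × B) ℂ}
    (hρ : ρ.PosSemidef) : mutInfo ρ = relEntropy ρ (ptraceB ρ ⊗ₖ ptraceA ρ) := by
  obtain ⟨U, a, -, hA⟩ := exists_eq_diagonalIn (posSemidef_ptraceB hρ)
  obtain ⟨V, b, -, hB⟩ := exists_eq_diagonalIn (posSemidef_ptraceA hρ)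
  let q : A × B → ℝ := basisProb (kroneckerUnitary U V) ρ
  have hqA : margA q = a := by
    rw [margA_basisProb_kroneckerUnitary, hA, basisProb_diagonalIn_self]
  have hqB : margB q = b := by
    rw [margB_basisProb_kroneckerUnitary, hB, basisProb_diagonalIn_self]
  have hlog : (ρ * cfc (Real.logb 2) (ptraceB ρ ⊗ₖ ptraceA ρ)).trace.re =
      ∑ x, q x * Real.logb 2 (a x.1 * b x.2) := by
    rw [hA, hB, diagonalIn_kronecker, cfc_diagonalIn, re_trace_mul_diagonalIn]
    rfl
  have hmarg : vnEntropy (ptraceB ρ) + vnEntropy (ptraceA ρ) =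
      -∑ x, q x * Real.logb 2 (a x.1 * b x.2) := by
    rw [hA, hB, vnEntropy_diagonalIn, vnEntropy_diagonalIn, ← hqA, ← hqB,
      shannon_margA_add_shannon_margB (basisProb_nonneg hρ _)]
  rw [mutInfo, hmarg, vnEntropy_eq_neg_re_trace hρ.isHermitian, relEntropy, Matrix.mul_sub,
    Matrix.trace_sub, Complex.sub_re, hlog]
  ring

end MutualInformation

section ProductEnsemble

lemma relEntropy_self_smul {n : Type*} [Fintype n] [DecidableEq n] {R : Matrix n n ℂ}
    (hR : R.IsHermitian) {c : ℝ} (hc : c ≠ 0) :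
    relEntropy R ((c : ℂ) • R) = -(R.trace.re * Real.logb 2 c) := by
  obtain ⟨U, d, rfl⟩ : ∃ U d, R = diagonalIn U d := ⟨_, _, eq_diagonalIn hR⟩
  have hsmul : (c : ℂ) • diagonalIn U d = diagonalIn U (c • d) := by
    rw [diagonalIn, ← Matrix.smul_mul, ← Matrix.mul_smul, ← diagonal_smul, diagonalIn]
    simp [Pi.smul_def]
  rw [relEntropy, hsmul, Matrix.mul_sub, Matrix.trace_sub, Complex.sub_re]
  simp only [cfc_diagonalIn, diagonalIn_mul_diagonalIn, re_trace_diagonalIn, Finset.sum_mul,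
    ← Finset.sum_sub_distrib, ← Finset.sum_neg_distrib]
  refine Finset.sum_congr rfl fun i _ ↦ ?_
  rcases eq_or_ne (d i) 0 with hi | hi
  · simp [hi]
  · simp only [Pi.mul_apply, Function.comp_apply, Pi.smul_apply, smul_eq_mul,
      Real.logb_mul hc hi]
    ring

lemma relEntropy_smul_smul_smul {n : Type} [Fintype n] [DecidableEq n] {σ : Matrix n n ℂ}
    (hσ : IsDensity σ) (p : ℝ) :
    relEntropy ((p : ℂ) • σ) ((p : ℂ) • (p : ℂ) • σ) = -(p * Real.logb 2 p) := by
  rcases eq_or_ne p 0 with rfl | hp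
  · simp [relEntropy]
  · have hpσ : ((p : ℂ) • σ).IsHermitian := hσ.1.isHermitian.smul (Complex.conj_ofReal p)
    rw [relEntropy_self_smul hpσ hp]
    simp [hσ.2]

variable {K A B : Type*} [Fintype K]

open scoped MatrixOrder in
lemma sum_kronecker_le [Finite A] [Finite B] {X : K → Matrix A A ℂ} {Y : K → Matrix B B ℂ}
    (hX : ∀ k, (X k).PosSemidef) (hY : ∀ k, (Y k).PosSemidef) :
    ∑ k, X k ⊗ₖ Y k ≤ (∑ k, X k) ⊗ₖ (∑ k, Y k) := by
  classical
  have hdiff : (∑ k, X k) ⊗ₖ (∑ k, Y k) - ∑ k, X k ⊗ₖ Y k =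
      ∑ k, X k ⊗ₖ ∑ l ∈ Finset.univ.erase k, Y l := by
    ext x y
    simp [Matrix.sum_apply, Finset.sum_mul, Finset.sum_erase_eq_sub, mul_sub]
  rw [Matrix.le_iff, hdiff]
  exact posSemidef_sum _ fun k _ ↦ (hX k).kronecker (posSemidef_sum _ fun l _ ↦ hY l)

lemma ptraceB_sum_kronecker {A B : Type} [Fintype B] (X : K → Matrix A A ℂ)
    (Y : K → Matrix B B ℂ) : ptraceB (∑ k, X k ⊗ₖ Y k) = ∑ k, (Y k).trace • X k := by
  ext a a'
  simp only [ptraceB, of_apply, Matrix.sum_apply, kroneckerMap_apply, Matrix.smul_apply,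
    Matrix.trace, Matrix.diag_apply, smul_eq_mul, Finset.sum_mul]
  rw [Finset.sum_comm]
  simp only [mul_comm]

lemma ptraceA_sum_kronecker {A B : Type} [Fintype A] (X : K → Matrix A A ℂ)
    (Y : K → Matrix B B ℂ) : ptraceA (∑ k, X k ⊗ₖ Y k) = ∑ k, (X k).trace • Y k := by
  ext b b'
  simp only [ptraceA, of_apply, Matrix.sum_apply, kroneckerMap_apply, Matrix.smul_apply,
    Matrix.trace, Matrix.diag_apply, smul_eq_mul, Finset.sum_mul]
  rw [Finset.sum_comm]

lemma isDensity_kronecker {A B : Type} [Fintype A] [Fintype B] {α : Matrix A A ℂ}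
    {β : Matrix B B ℂ} (hα : IsDensity α) (hβ : IsDensity β) : IsDensity (α ⊗ₖ β) :=
  ⟨hα.1.kronecker hβ.1, by rw [trace_kronecker, hα.2, hβ.2, one_mul]⟩

open scoped MatrixOrder in
theorem mutInfo_sum_smul_kronecker_le_shannon {K A B : Type} [Fintype K] [Fintype A] [Fintype B]
    [DecidableEq A] [DecidableEq B] {p : K → ℝ} (hp : 0 ≤ p) {α : K → Matrix A A ℂ}
    {β : K → Matrix B B ℂ} (hα : ∀ k, IsDensity (α k)) (hβ : ∀ k, IsDensity (β k)) :
    mutInfo (∑ k, (p k : ℂ) • (α k ⊗ₖ β k)) ≤ shannon p := by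
  let R (k : K) : Matrix (A × B) (A × B) ℂ := (p k : ℂ) • (α k ⊗ₖ β k)
  have hαβ (k : K) : IsDensity (α k ⊗ₖ β k) := isDensity_kronecker (hα k) (hβ k)
  have hpk (k : K) : (0 : ℂ) ≤ p k := Complex.zero_le_real.mpr (hp k)
  have hR (k : K) : (R k).PosSemidef := (hαβ k).1.smul (hpk k)
  have hpα (k : K) : ((p k : ℂ) • α k).PosSemidef := (hα k).1.smul (hpk k)
  have hpβ (k : K) : ((p k : ℂ) • β k).PosSemidef := (hβ k).1.smul (hpk k)
  have hρA : ptraceB (∑ k, R k) = ∑ k, (p k : ℂ) • α k := by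
    simp only [R, ← smul_kronecker, ptraceB_sum_kronecker, (hβ _).2, one_smul]
  have hρB : ptraceA (∑ k, R k) = ∑ k, (p k : ℂ) • β k := by
    simp only [R, ← kronecker_smul, ptraceA_sum_kronecker, (hα _).2, one_smul]
  have hker (k : K) (v : A × B → ℂ) (hv : ((p k : ℂ) • R k) *ᵥ v = 0) : R k *ᵥ v = 0 := by
    rcases eq_or_ne (p k) 0 with hk | hk
    · simp [R, hk]
    · simpa [smul_mulVec, hk] using hv
  have hle : ∑ k, (p k : ℂ) • R k ≤ (∑ k, (p k : ℂ) • α k) ⊗ₖ ∑ k, (p k : ℂ) • β k := by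
    simpa only [R, smul_kronecker, kronecker_smul] using sum_kronecker_le hpα hpβ
  calc mutInfo (∑ k, R k)
      = relEntropy (∑ k, R k) ((∑ k, (p k : ℂ) • α k) ⊗ₖ ∑ k, (p k : ℂ) • β k) := by
        rw [mutInfo_eq_relEntropy (posSemidef_sum _ fun k _ ↦ hR k), hρA, hρB]
    _ ≤ ∑ k, relEntropy (R k) ((p k : ℂ) • R k) :=
        relEntropy_sum_le hR (fun k ↦ (hR k).smul (hpk k))
          ((posSemidef_sum _ fun k _ ↦ hpα k).kronecker (posSemidef_sum _ fun k _ ↦ hpβ k))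
          hker hle
    _ = shannon p := by
        simp only [R, relEntropy_smul_smul_smul (hαβ _), Finset.sum_neg_distrib, shannon]

end ProductEnsemble

section TensorPower

variable {A B C : Type*} {ι : Type*} [Fintype ι]

/-- The tensor power `M^{⊗ι}` of a matrix, with rows and columns indexed by functions on `ι`. -/
def tensorPower (ι : Type*) [Fintype ι] (M : Matrix A B ℂ) : Matrix (ι → A) (ι → B) ℂ :=
  of fun x y ↦ ∏ i, M (x i) (y i)

lemma tensorPower_mul [DecidableEq ι] [Fintype B] (M : Matrix A B ℂ) (N : Matrix B C ℂ) :
    tensorPower ι (M * N) = tensorPower ι M * tensorPower ι N := by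
  ext x y
  simp only [tensorPower, of_apply, Matrix.mul_apply, Finset.prod_univ_sum,
    Fintype.piFinset_univ, Finset.prod_mul_distrib]

lemma conjTranspose_tensorPower (M : Matrix A B ℂ) :
    (tensorPower ι M)ᴴ = tensorPower ι Mᴴ := by
  ext x y
  simp [tensorPower]

lemma trace_tensorPower [DecidableEq ι] [Fintype A] (M : Matrix A A ℂ) :
    (tensorPower ι M).trace = M.trace ^ Fintype.card ι := by
  rw [← Finset.card_univ, ← Finset.prod_const]
  simp only [Matrix.trace, Finset.prod_univ_sum, Fintype.piFinset_univ]
  rfl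

open scoped MatrixOrder in
lemma posSemidef_tensorPower [Finite A] {M : Matrix A A ℂ} (hM : M.PosSemidef) :
    (tensorPower ι M).PosSemidef := by
  classical
  cases nonempty_fintype A
  obtain ⟨C, rfl⟩ := CStarAlgebra.nonneg_iff_eq_star_mul_self.mp
    (Matrix.nonneg_iff_posSemidef.mpr hM)
  rw [star_eq_conjTranspose, tensorPower_mul, ← conjTranspose_tensorPower]
  exact posSemidef_conjTranspose_mul_self _

lemma isDensity_tensorPower {A ι : Type} [Fintype ι] [DecidableEq ι] [Fintype A]
    {M : Matrix A A ℂ} (hM : IsDensity M) : IsDensity (tensorPower ι M) :=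
  ⟨posSemidef_tensorPower hM.1, by rw [trace_tensorPower, hM.2, one_pow]⟩

lemma tpow_kronecker {A B : Type} (M : Matrix A A ℂ) (N : Matrix B B ℂ) (n : ℕ) :
    tpow (M ⊗ₖ N) n = tensorPower (Fin n) M ⊗ₖ tensorPower (Fin n) N := by
  ext x y
  simp [tpow, tensorPower, Finset.prod_mul_distrib]

end TensorPower

/-- the mutual information across the A^n : B^n cut of a de Finetti
state built from product states is at most the Shannon entropy of the weights,
uniformly in n. -/
theorem stmt_5 {A B K : Type} [Fintype A] [Fintype B] [Fintype K]
    [DecidableEq A] [DecidableEq B]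
    (p : K → ℝ) (hp : ∀ k, 0 ≤ p k) (hp1 : ∑ k, p k = 1)
    (ρA : K → Matrix A A ℂ) (ρB : K → Matrix B B ℂ)
    (hA : ∀ k, IsDensity (ρA k)) (hB : ∀ k, IsDensity (ρB k))
    (n : ℕ) (hn : 1 ≤ n) :
    mutInfo (∑ k, (p k : ℂ) • tpow (ρA k ⊗ₖ ρB k) n) ≤ shannon p := by
  simp only [tpow_kronecker]
  exact mutInfo_sum_smul_kronecker_le_shannon hp (fun k ↦ isDensity_tensorPower (hA k))
    fun k ↦ isDensity_tensorPower (hB k)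

end
end

section
/- For a classical-classical state ρ_{AB} = ∑_{ij} p_{ij} |i⟩⟨i|_A ⊗ |j⟩⟨j|_B, and any n ≥ 1, the n-copy broadcast mutual information satisfies (I_b)_n(ρ_{AB}) = I(ρ_{AB}); i.e., there exists an n-copy broadcast state whose mutual information across the A^n : B^n cut equals I(ρ_{AB}), and no broadcast copy achieves less. -/
open scoped BigOperators Kronecker ComplexOrder
open Matrix Filter Topology

noncomputable section

/-!
Upper bound: the isometry that sends each vector of a product basis to its `n`-th tensor power acts
locally on `A` and on `B`. Applied to a state diagonal in that basis it produces a broadcast state,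
and a local isometry preserves all three entropies in the mutual information.

Lower bound: measuring one copy of a broadcast state in the product eigenbasis of `ρ` reproduces
`p`, so it suffices that the mutual information of the outcomes of local measurements is at most the
quantum one. The latter is the *classical* divergence of the Nussbaum–Szkoła distributions of `τ`
and `τ_A ⊗ τ_B`. Two classical divergences are compared through the functionals
`s ↦ ∑ p log (q / p + s)`, which agree at `s = ∞` and equal minus the divergence at `s = 0`: it is
enough to order their derivatives `∑ p² / (q + s p)` for each `s > 0`. For the Nussbaum–Szkoła
distributions this derivative bounds the quadratic form
`X ↦ 2 re tr (Xᴴ τ) - re tr (X σ Xᴴ) - s re tr (Xᴴ τ X)`, and for measurement outcomes it is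
at most the value of this form at a real combination `X = ∑ cᵢ Eᵢ` of the effects, by the operator
inequality `(∑ cᵢ Eᵢ)² ≤ ∑ cᵢ² Eᵢ`.
-/

section ClassicalDivergence

variable {X Y : Type} [Fintype X] [Fintype Y]

lemma klDiv_eq_sub {p q : X → ℝ} (hpq : ∀ x, q x = 0 → p x = 0) :
    klDiv p q = ∑ x, p x * Real.logb 2 (p x) - ∑ x, p x * Real.logb 2 (q x) := by
  rw [klDiv, ← Finset.sum_sub_distrib]
  refine Finset.sum_congr rfl fun x _ => ?_
  rcases eq_or_ne (p x) 0 with hp | hp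
  · simp [hp]
  · rw [Real.logb_div hp (mt (hpq x) hp), mul_sub]

lemma eq_zero_of_margA_mul_margB_eq_zero {p : X × Y → ℝ} (hp : ∀ x, 0 ≤ p x) (x : X × Y)
    (hx : margA p x.1 * margB p x.2 = 0) : p x = 0 := by
  rcases mul_eq_zero.1 hx with h | h
  · exact (Finset.sum_eq_zero_iff_of_nonneg fun j _ => hp (x.1, j)).1 h x.2 (Finset.mem_univ _)
  · exact (Finset.sum_eq_zero_iff_of_nonneg fun i _ => hp (i, x.2)).1 h x.1 (Finset.mem_univ _)

lemma sum_mul_fst (p : X × Y → ℝ) (f : X → ℝ) :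
    ∑ x, p x * f x.1 = ∑ i, margA p i * f i := by
  simp only [Fintype.sum_prod_type, margA, Finset.sum_mul]

lemma sum_mul_snd (p : X × Y → ℝ) (g : Y → ℝ) :
    ∑ x, p x * g x.2 = ∑ j, margB p j * g j := by
  simp only [Fintype.sum_prod_type_right, margB, Finset.sum_mul]

lemma sum_mul_logb_margA_mul_margB {p : X × Y → ℝ} (hp : ∀ x, 0 ≤ p x) :
    ∑ x, p x * Real.logb 2 (margA p x.1 * margB p x.2) =
      -(shannon (margA p) + shannon (margB p)) := by
  have hlog : ∀ x, p x * Real.logb 2 (margA p x.1 * margB p x.2) =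
      p x * Real.logb 2 (margA p x.1) + p x * Real.logb 2 (margB p x.2) := fun x => by
    by_cases hx : margA p x.1 * margB p x.2 = 0
    · simp [eq_zero_of_margA_mul_margB_eq_zero hp x hx]
    · rw [Real.logb_mul (left_ne_zero_of_mul hx) (right_ne_zero_of_mul hx), mul_add]
  simp only [hlog, Finset.sum_add_distrib, shannon]
  rw [sum_mul_fst p fun i => Real.logb 2 (margA p i),
    sum_mul_snd p fun j => Real.logb 2 (margB p j)]
  ring

lemma classMI_eq_klDiv {p : X × Y → ℝ} (hp : ∀ x, 0 ≤ p x) :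
    classMI p = klDiv p fun x => margA p x.1 * margB p x.2 := by
  rw [klDiv_eq_sub (eq_zero_of_margA_mul_margB_eq_zero hp), sum_mul_logb_margA_mul_margB hp,
    classMI]
  simp only [shannon]
  ring

end ClassicalDivergence

section DivergenceComparison

variable {X Y : Type} [Fintype X] [Fintype Y]

/-- The interpolating functional `s ↦ ∑ p log (q / p + s)`: at `s = 0` it is `-klDiv p q` in natural
units, and for large `s` it is asymptotic to `(∑ p) log s` whatever `q` is. -/
def shiftedLog (p q : X → ℝ) (s : ℝ) : ℝ := ∑ x, p x * Real.log (q x / p x + s)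

lemma klDiv_eq_neg_shiftedLog (p q : X → ℝ) :
    klDiv p q = -(shiftedLog p q 0 / Real.log 2) := by
  simp only [klDiv, shiftedLog, add_zero, Real.logb, Finset.sum_div, ← Finset.sum_neg_distrib]
  refine Finset.sum_congr rfl fun x _ => ?_
  rw [← inv_div (q x), Real.log_inv]
  ring

lemma hasDerivAt_shiftedLog {p q : X → ℝ} (hp : ∀ x, 0 ≤ p x) (hq : ∀ x, 0 ≤ q x) {s : ℝ}
    (hs : 0 < s) :
    HasDerivAt (shiftedLog p q) (∑ x, p x ^ 2 / (q x + s * p x)) s := by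
  refine HasDerivAt.fun_sum fun x _ => ?_
  have hpos : 0 < q x / p x + s := add_pos_of_nonneg_of_pos (div_nonneg (hq x) (hp x)) hs
  refine ((((hasDerivAt_id' s).const_add (q x / p x)).log hpos.ne').const_mul (p x)).congr_deriv ?_
  rcases (hp x).eq_or_lt with hx | hx
  · simp [← hx]
  · have : q x + s * p x ≠ 0 := by have := hq x; positivity
    field_simp

lemma continuousOn_shiftedLog {p q : X → ℝ} (hp : ∀ x, 0 ≤ p x) (hq : ∀ x, 0 ≤ q x)
    (hpq : ∀ x, q x = 0 → p x = 0) : ContinuousOn (shiftedLog p q) (Set.Ici 0) := by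
  refine continuousOn_finsetSum _ fun x _ => ?_
  rcases (hp x).eq_or_lt with hx | hx
  · simp only [← hx, zero_mul]
    exact continuousOn_const
  · have hqx : 0 < q x := (hq x).lt_of_ne fun h => hx.ne' (hpq x h.symm)
    refine continuousOn_const.mul ((by fun_prop : ContinuousOn _ _).log fun s hs => ?_)
    exact (add_pos_of_pos_of_nonneg (div_pos hqx hx) hs).ne'

lemma tendsto_shiftedLog_sub_log (p q : X → ℝ) :
    Tendsto (fun s => shiftedLog p q s - (∑ x, p x) * Real.log s) atTop (𝓝 0) := by
  have h : Tendsto (fun s => ∑ x, p x * (Real.log (s + q x / p x) - Real.log s)) atTop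
      (𝓝 (∑ x, p x * 0)) :=
    tendsto_finsetSum _ fun x _ => (Real.tendsto_log_comp_add_sub_log _).const_mul _
  simpa only [mul_sub, Finset.sum_sub_distrib, ← Finset.sum_mul, mul_zero, Finset.sum_const_zero,
    shiftedLog, add_comm] using h

variable {p q : X → ℝ} {P Q : Y → ℝ}

lemma eq_zero_of_sum_sq_div_le (hp : ∀ x, 0 ≤ p x) (hq : ∀ x, 0 ≤ q x) (hP : ∀ y, 0 ≤ P y)
    (hQ : ∀ y, 0 ≤ Q y) (hPQ : ∀ y, Q y = 0 → P y = 0)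
    (h : ∀ s, 0 < s → ∑ x, p x ^ 2 / (q x + s * p x) ≤ ∑ y, P y ^ 2 / (Q y + s * P y)) (x : X)
    (hx : q x = 0) : p x = 0 := by
  by_contra hpx
  have hpx : 0 < p x := (hp x).lt_of_ne' hpx
  set M := ∑ y, P y ^ 2 / Q y
  have hM : 0 ≤ M := Finset.sum_nonneg fun y _ => div_nonneg (sq_nonneg _) (hQ y)
  have hbound : ∀ s, 0 < s → p x / s ≤ M := fun s hs =>
    calc p x / s = p x ^ 2 / (q x + s * p x) := by rw [hx]; field_simp; ring
      _ ≤ ∑ x, p x ^ 2 / (q x + s * p x) := by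
        refine Finset.single_le_sum (f := fun x => p x ^ 2 / (q x + s * p x)) (fun z _ => ?_)
          (Finset.mem_univ x)
        have := hp z; have := hq z; positivity
      _ ≤ ∑ y, P y ^ 2 / (Q y + s * P y) := h s hs
      _ ≤ M := by
        refine Finset.sum_le_sum fun y _ => ?_
        rcases (hQ y).eq_or_lt with hy | hy
        · simp [hPQ y hy.symm]
        · gcongr
          exact le_add_of_nonneg_right (mul_nonneg hs.le (hP y))
  have hcontra := hbound (p x / (M + 1)) (by positivity)
  rw [div_div_cancel₀ hpx.ne'] at hcontra
  linarith

-- The hypothesis compares the derivatives of the two functionals `shiftedLog`, which agree at `∞`.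
lemma klDiv_le_klDiv_of_sum_sq_div_le (hp : ∀ x, 0 ≤ p x) (hq : ∀ x, 0 ≤ q x)
    (hP : ∀ y, 0 ≤ P y) (hQ : ∀ y, 0 ≤ Q y) (hPQ : ∀ y, Q y = 0 → P y = 0)
    (hsum : ∑ x, p x = ∑ y, P y)
    (h : ∀ s, 0 < s → ∑ x, p x ^ 2 / (q x + s * p x) ≤ ∑ y, P y ^ 2 / (Q y + s * P y)) :
    klDiv p q ≤ klDiv P Q := by
  have hpq := eq_zero_of_sum_sq_div_le hp hq hP hQ hPQ h
  have hmono : MonotoneOn (fun s => shiftedLog P Q s - shiftedLog p q s) (Set.Ici 0) := by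
    refine monotoneOn_of_hasDerivWithinAt_nonneg (convex_Ici 0)
      ((continuousOn_shiftedLog hP hQ hPQ).sub (continuousOn_shiftedLog hp hq hpq))
      (fun s hs => ?_) fun s hs => sub_nonneg.2 (h s (by simpa using hs))
    rw [interior_Ici, Set.mem_Ioi] at hs
    exact ((hasDerivAt_shiftedLog hP hQ hs).sub (hasDerivAt_shiftedLog hp hq hs)).hasDerivWithinAt
  have hlim : Tendsto (fun s => shiftedLog P Q s - shiftedLog p q s) atTop (𝓝 0) := by
    simpa [hsum] using (tendsto_shiftedLog_sub_log P Q).sub (tendsto_shiftedLog_sub_log p q)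
  have hle : shiftedLog P Q 0 ≤ shiftedLog p q 0 := by
    refine sub_nonpos.1 (ge_of_tendsto hlim ?_)
    filter_upwards [eventually_ge_atTop 0] with s hs using hmono Set.self_mem_Ici hs hs
  rw [klDiv_eq_neg_shiftedLog, klDiv_eq_neg_shiftedLog]
  gcongr

end DivergenceComparison

section Entropy

lemma isHermitian_diagonal_ofReal {n : Type} [DecidableEq n] (p : n → ℝ) :
    (diagonal fun i => (p i : ℂ)).IsHermitian :=
  isHermitian_diagonal_iff.2 fun i => Complex.conj_ofReal (p i)

variable {m n : Type} [Fintype m] [Fintype n] [DecidableEq m] [DecidableEq n]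

lemma vnEntropy_eq_sum_roots {ρ : Matrix n n ℂ} (hρ : ρ.IsHermitian) :
    vnEntropy ρ = -(ρ.charpoly.roots.map fun z => z.re * Real.logb 2 z.re).sum := by
  rw [vnEntropy, dif_pos hρ, hρ.roots_charpoly_eq_eigenvalues, Multiset.map_map]
  rfl

lemma vnEntropy_diagonal (p : n → ℝ) : vnEntropy (diagonal fun i => (p i : ℂ)) = shannon p := by
  rw [vnEntropy_eq_sum_roots (isHermitian_diagonal_ofReal p), charpoly_diagonal,
    Polynomial.roots_prod _ _ (Finset.prod_ne_zero_iff.2 fun _ _ => Polynomial.X_sub_C_ne_zero _)]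
  simp [shannon]

-- The nonzero spectra of `K (ρ Kᴴ)` and `(ρ Kᴴ) K` agree, and zero eigenvalues carry no entropy.
lemma vnEntropy_conj {ρ : Matrix n n ℂ} (hρ : ρ.IsHermitian) {K : Matrix m n ℂ}
    (hK : Kᴴ * K = 1) : vnEntropy (K * ρ * Kᴴ) = vnEntropy ρ := by
  have hchar := congrArg Polynomial.roots (charpoly_mul_comm' K (ρ * Kᴴ))
  rw [Matrix.mul_assoc ρ, hK, Matrix.mul_one, ← Matrix.mul_assoc,
    Polynomial.roots_mul (((Polynomial.monic_X_pow _).mul (charpoly_monic _)).ne_zero),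
    Polynomial.roots_mul (((Polynomial.monic_X_pow _).mul (charpoly_monic _)).ne_zero),
    Polynomial.roots_X_pow, Polynomial.roots_X_pow] at hchar
  have hsum := congrArg (fun s => (s.map fun z : ℂ => z.re * Real.logb 2 z.re).sum) hchar
  rw [vnEntropy_eq_sum_roots (isHermitian_mul_mul_conjTranspose K hρ), vnEntropy_eq_sum_roots hρ]
  simpa [Multiset.nsmul_singleton] using hsum

/-- `ρ = U diag(t) Uᴴ` with `U` unitary: the columns of `U` are an eigenbasis of `ρ` and `t` lists
the eigenvalues, in an arbitrary order. -/
structure IsSpectralDecomp (ρ U : Matrix n n ℂ) (t : n → ℝ) : Prop where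
  mem_unitaryGroup : U ∈ unitaryGroup n ℂ
  eq_conj : ρ = U * diagonal (fun i => (t i : ℂ)) * Uᴴ

lemma exists_isSpectralDecomp {ρ : Matrix n n ℂ} (hρ : ρ.IsHermitian) :
    ∃ U t, IsSpectralDecomp ρ U t :=
  ⟨hρ.eigenvectorUnitary, hρ.eigenvalues, hρ.eigenvectorUnitary.2, hρ.spectral_theorem⟩

namespace IsSpectralDecomp

variable {ρ U : Matrix n n ℂ} {t : n → ℝ}

lemma conjTranspose_mul_self (h : IsSpectralDecomp ρ U t) : Uᴴ * U = 1 :=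
  mem_unitaryGroup_iff'.1 h.mem_unitaryGroup

lemma mul_conjTranspose_self (h : IsSpectralDecomp ρ U t) : U * Uᴴ = 1 :=
  mem_unitaryGroup_iff.1 h.mem_unitaryGroup

lemma conjTranspose_conj (h : IsSpectralDecomp ρ U t) :
    Uᴴ * ρ * U = diagonal fun i => (t i : ℂ) := by
  rw [h.eq_conj, Matrix.mul_assoc, Matrix.mul_assoc, h.conjTranspose_mul_self, Matrix.mul_one,
    ← Matrix.mul_assoc, h.conjTranspose_mul_self, Matrix.one_mul]

lemma nonneg (h : IsSpectralDecomp ρ U t) (hρ : ρ.PosSemidef) (i : n) : 0 ≤ t i := by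
  have := hρ.conjTranspose_mul_mul_same U
  rw [h.conjTranspose_conj, posSemidef_diagonal_iff] at this
  exact Complex.zero_le_real.1 (this i)

lemma re_trace (h : IsSpectralDecomp ρ U t) : ρ.trace.re = ∑ i, t i := by
  rw [h.eq_conj, trace_mul_cycle, h.conjTranspose_mul_self, Matrix.one_mul, trace_diagonal]
  simp

lemma vnEntropy_eq (h : IsSpectralDecomp ρ U t) : vnEntropy ρ = shannon t := by
  rw [h.eq_conj, vnEntropy_conj (isHermitian_diagonal_ofReal t) h.conjTranspose_mul_self,
    vnEntropy_diagonal]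

lemma kronecker {σ V : Matrix m m ℂ} {s : m → ℝ} (h : IsSpectralDecomp ρ U t)
    (h' : IsSpectralDecomp σ V s) :
    IsSpectralDecomp (ρ ⊗ₖ σ) (U ⊗ₖ V) fun x => t x.1 * s x.2 := by
  refine ⟨kronecker_mem_unitary h.mem_unitaryGroup h'.mem_unitaryGroup, ?_⟩
  rw [h.eq_conj, h'.eq_conj, mul_kronecker_mul, mul_kronecker_mul, diagonal_kronecker_diagonal,
    conjTranspose_kronecker]
  simp only [Complex.ofReal_mul]

end IsSpectralDecomp

end Entropy

section PartialTrace

variable {A A' B B' : Type}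

lemma ptraceB_eq_sum_submatrix [Fintype B] (τ : Matrix (A × B) (A × B) ℂ) :
    ptraceB τ = ∑ b, τ.submatrix (·, b) (·, b) := by
  ext
  simp [ptraceB, Matrix.sum_apply]

lemma ptraceB_isHermitian [Fintype B] {τ : Matrix (A × B) (A × B) ℂ} (hτ : τ.IsHermitian) :
    (ptraceB τ).IsHermitian := by
  ext a a'
  simp [ptraceB, fun x y => hτ.apply x y]

lemma ptraceA_isHermitian [Fintype A] {τ : Matrix (A × B) (A × B) ℂ} (hτ : τ.IsHermitian) :
    (ptraceA τ).IsHermitian :=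
  ptraceB_isHermitian (hτ.submatrix Prod.swap)

lemma ptraceB_posSemidef [Fintype B] {τ : Matrix (A × B) (A × B) ℂ} (hτ : τ.PosSemidef) :
    (ptraceB τ).PosSemidef := by
  rw [ptraceB_eq_sum_submatrix]
  exact posSemidef_sum _ fun b _ => hτ.submatrix (·, b)

lemma ptraceA_posSemidef [Fintype A] {τ : Matrix (A × B) (A × B) ℂ} (hτ : τ.PosSemidef) :
    (ptraceA τ).PosSemidef :=
  ptraceB_posSemidef (hτ.submatrix Prod.swap)

variable [Fintype A] [Fintype B]

lemma trace_kronecker_one_mul [DecidableEq B] (M : Matrix A A ℂ) (τ : Matrix (A × B) (A × B) ℂ) :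
    ((M ⊗ₖ (1 : Matrix B B ℂ)) * τ).trace = (M * ptraceB τ).trace := by
  simp only [trace, diag_apply, mul_apply, ptraceB, of_apply, Fintype.sum_prod_type,
    kroneckerMap_apply, one_apply, mul_ite, mul_one, mul_zero, ite_mul, zero_mul,
    Finset.sum_ite_eq, Finset.mem_univ, if_true, Finset.mul_sum]
  exact Finset.sum_congr rfl fun a _ => Finset.sum_comm

lemma trace_one_kronecker_mul [DecidableEq A] (N : Matrix B B ℂ) (τ : Matrix (A × B) (A × B) ℂ) :
    (((1 : Matrix A A ℂ) ⊗ₖ N) * τ).trace = (N * ptraceA τ).trace := by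
  simp only [trace, diag_apply, mul_apply, ptraceA, of_apply, Fintype.sum_prod_type_right,
    kroneckerMap_apply, one_apply, ite_mul, one_mul, zero_mul, Finset.sum_ite_eq,
    Finset.mem_univ, if_true, Finset.mul_sum]
  exact Finset.sum_congr rfl fun b _ => Finset.sum_comm

lemma trace_mul_conj {m n R : Type*} [Fintype m] [Fintype n] [CommSemiring R] [StarRing R]
    (X : Matrix m m R) (K : Matrix m n R) (τ : Matrix n n R) :
    (X * (K * τ * Kᴴ)).trace = (Kᴴ * X * K * τ).trace := by
  rw [Matrix.mul_assoc K, ← Matrix.mul_assoc, trace_mul_comm]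
  simp only [Matrix.mul_assoc]
  rw [trace_mul_comm]
  simp only [Matrix.mul_assoc]

lemma ptraceB_conj [Finite A'] [Fintype B'] [DecidableEq B] {K : Matrix A' A ℂ}
    {L : Matrix B' B ℂ} (hL : Lᴴ * L = 1) (τ : Matrix (A × B) (A × B) ℂ) :
    ptraceB ((K ⊗ₖ L) * τ * (K ⊗ₖ L)ᴴ) = K * ptraceB τ * Kᴴ := by
  classical
  cases nonempty_fintype A'
  refine ext_iff_trace_mul_left.2 fun X => ?_
  rw [← trace_kronecker_one_mul, trace_mul_conj, trace_mul_conj, ← trace_kronecker_one_mul,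
    conjTranspose_kronecker, ← mul_kronecker_mul, ← mul_kronecker_mul, Matrix.mul_one, hL]

lemma ptraceA_conj [Fintype A'] [Finite B'] [DecidableEq A] {K : Matrix A' A ℂ}
    {L : Matrix B' B ℂ} (hK : Kᴴ * K = 1) (τ : Matrix (A × B) (A × B) ℂ) :
    ptraceA ((K ⊗ₖ L) * τ * (K ⊗ₖ L)ᴴ) = L * ptraceA τ * Lᴴ := by
  classical
  cases nonempty_fintype B'
  refine ext_iff_trace_mul_left.2 fun X => ?_
  rw [← trace_one_kronecker_mul, trace_mul_conj, trace_mul_conj, ← trace_one_kronecker_mul,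
    conjTranspose_kronecker, ← mul_kronecker_mul, ← mul_kronecker_mul, Matrix.mul_one, hK]

end PartialTrace

section MutualInformation

variable {A A' B B' : Type} [DecidableEq A] [DecidableEq B]

lemma ptraceB_diagonal [Fintype B] (p : A × B → ℝ) :
    ptraceB (diagonal fun x => (p x : ℂ)) = diagonal fun a => (margA p a : ℂ) := by
  ext a a'
  by_cases h : a = a' <;> simp [ptraceB, margA, diagonal_apply, h]

lemma ptraceA_diagonal [Fintype A] (p : A × B → ℝ) :
    ptraceA (diagonal fun x => (p x : ℂ)) = diagonal fun b => (margB p b : ℂ) := by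
  ext b b'
  by_cases h : b = b' <;> simp [ptraceA, margB, diagonal_apply, h]

lemma mutInfo_diagonal [Fintype A] [Fintype B] (p : A × B → ℝ) :
    mutInfo (diagonal fun x => (p x : ℂ)) = classMI p := by
  rw [mutInfo, ptraceB_diagonal, ptraceA_diagonal, vnEntropy_diagonal, vnEntropy_diagonal,
    vnEntropy_diagonal, classMI]

lemma conjTranspose_kronecker_mul_self {l m n o R : Type*} [Fintype l] [Fintype n] [DecidableEq m]
    [DecidableEq o] [CommSemiring R] [StarRing R] {K : Matrix l m R} {L : Matrix n o R}
    (hK : Kᴴ * K = 1) (hL : Lᴴ * L = 1) : (K ⊗ₖ L)ᴴ * (K ⊗ₖ L) = 1 := by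
  rw [conjTranspose_kronecker, ← mul_kronecker_mul, hK, hL, one_kronecker_one]

variable [Fintype A] [Fintype B] [Fintype A'] [Fintype B'] [DecidableEq A'] [DecidableEq B']

lemma mutInfo_conj {K : Matrix A' A ℂ} {L : Matrix B' B ℂ} (hK : Kᴴ * K = 1) (hL : Lᴴ * L = 1)
    {τ : Matrix (A × B) (A × B) ℂ} (hτ : τ.IsHermitian) :
    mutInfo ((K ⊗ₖ L) * τ * (K ⊗ₖ L)ᴴ) = mutInfo τ := by
  rw [mutInfo, mutInfo, ptraceB_conj hL, ptraceA_conj hK,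
    vnEntropy_conj (ptraceB_isHermitian hτ) hK, vnEntropy_conj (ptraceA_isHermitian hτ) hL,
    vnEntropy_conj hτ (conjTranspose_kronecker_mul_self hK hL)]

lemma mutInfo_conj_diagonal {K : Matrix A' A ℂ} {L : Matrix B' B ℂ} (hK : Kᴴ * K = 1)
    (hL : Lᴴ * L = 1) (p : A × B → ℝ) :
    mutInfo ((K ⊗ₖ L) * diagonal (fun x => (p x : ℂ)) * (K ⊗ₖ L)ᴴ) = classMI p := by
  rw [mutInfo_conj hK hL (isHermitian_diagonal_ofReal p), mutInfo_diagonal]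

end MutualInformation

section NussbaumSzkola

variable {n : Type} [Fintype n]

/-- The first Nussbaum–Szkoła distribution of the pair `(V diag(t) Vᴴ, U diag(d) Uᴴ)`. The
divergence of the two distributions is the quantum relative entropy of the pair. -/
def nussbaumSzkolaLeft (V U : Matrix n n ℂ) (t : n → ℝ) : n × n → ℝ :=
  fun x => t x.1 * Complex.normSq ((Vᴴ * U) x.1 x.2)

/-- The second Nussbaum–Szkoła distribution of the pair `(V diag(t) Vᴴ, U diag(d) Uᴴ)`. -/
def nussbaumSzkolaRight (V U : Matrix n n ℂ) (d : n → ℝ) : n × n → ℝ :=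
  fun x => d x.2 * Complex.normSq ((Vᴴ * U) x.1 x.2)

variable {τ V U : Matrix n n ℂ} {t d : n → ℝ}

lemma nussbaumSzkolaLeft_nonneg (ht : ∀ i, 0 ≤ t i) (x : n × n) :
    0 ≤ nussbaumSzkolaLeft V U t x :=
  mul_nonneg (ht _) (Complex.normSq_nonneg _)

lemma margB_nussbaumSzkolaLeft_nonneg (ht : ∀ i, 0 ≤ t i) (j : n) :
    0 ≤ margB (nussbaumSzkolaLeft V U t) j :=
  Finset.sum_nonneg fun i _ => nussbaumSzkolaLeft_nonneg ht (i, j)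

lemma nussbaumSzkolaRight_nonneg (hd : ∀ i, 0 ≤ d i) (x : n × n) :
    0 ≤ nussbaumSzkolaRight V U d x :=
  mul_nonneg (hd _) (Complex.normSq_nonneg _)

lemma nussbaumSzkolaLeft_eq_zero (ht : ∀ i, 0 ≤ t i)
    (hac : ∀ j, d j = 0 → margB (nussbaumSzkolaLeft V U t) j = 0) (x : n × n)
    (hx : nussbaumSzkolaRight V U d x = 0) : nussbaumSzkolaLeft V U t x = 0 := by
  rcases mul_eq_zero.1 hx with hd | hw
  · exact (Finset.sum_eq_zero_iff_of_nonneg fun i _ => nussbaumSzkolaLeft_nonneg ht (i, x.2)).1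
      (hac x.2 hd) x.1 (Finset.mem_univ _)
  · rw [nussbaumSzkolaLeft, hw, mul_zero]

variable [DecidableEq n]

lemma margA_nussbaumSzkolaLeft (hV : Vᴴ * V = 1) (hU : U * Uᴴ = 1) :
    margA (nussbaumSzkolaLeft V U t) = t := by
  have hrow : Vᴴ * U * (Vᴴ * U)ᴴ = 1 := by
    rw [conjTranspose_mul, conjTranspose_conjTranspose, Matrix.mul_assoc, ← Matrix.mul_assoc U,
      hU, Matrix.one_mul, hV]
  funext i
  have hnorm : ∑ j, Complex.normSq ((Vᴴ * U) i j) = 1 := by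
    have h := congrArg Complex.re (congrFun₂ hrow i i)
    rw [mul_apply, one_apply_eq, Complex.re_sum] at h
    simpa [Complex.mul_conj] using h
  simp only [margA, nussbaumSzkolaLeft, ← Finset.mul_sum, hnorm, mul_one]

lemma IsSpectralDecomp.margB_nussbaumSzkolaLeft (hτ : IsSpectralDecomp τ V t) (j : n) :
    margB (nussbaumSzkolaLeft V U t) j = ((Uᴴ * τ * U) j j).re := by
  have hconj : Uᴴ * τ * U = (Vᴴ * U)ᴴ * diagonal (fun i => (t i : ℂ)) * (Vᴴ * U) := by
    rw [hτ.eq_conj, conjTranspose_mul, conjTranspose_conjTranspose]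
    simp only [Matrix.mul_assoc]
  rw [hconj, mul_apply, Complex.re_sum]
  refine Finset.sum_congr rfl fun i _ => ?_
  rw [mul_diagonal, conjTranspose_apply, mul_right_comm, Complex.star_def,
    ← Complex.normSq_eq_conj_mul_self, ← Complex.ofReal_mul, Complex.ofReal_re, mul_comm,
    nussbaumSzkolaLeft]

lemma klDiv_nussbaumSzkola (hV : Vᴴ * V = 1) (hU : U * Uᴴ = 1)
    (hac : ∀ x, nussbaumSzkolaRight V U d x = 0 → nussbaumSzkolaLeft V U t x = 0) :
    klDiv (nussbaumSzkolaLeft V U t) (nussbaumSzkolaRight V U d) =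
      -shannon t - ∑ j, margB (nussbaumSzkolaLeft V U t) j * Real.logb 2 (d j) := by
  set P := nussbaumSzkolaLeft V U t with hP
  have hlog : ∀ x, P x * Real.logb 2 (P x / nussbaumSzkolaRight V U d x) =
      P x * Real.logb 2 (t x.1) - P x * Real.logb 2 (d x.2) := fun x => by
    rcases eq_or_ne (P x) 0 with hx | hx
    · simp [hx]
    · have ht : t x.1 ≠ 0 := left_ne_zero_of_mul hx
      have hd : d x.2 ≠ 0 := left_ne_zero_of_mul (mt (hac x) hx)
      rw [hP, nussbaumSzkolaLeft, nussbaumSzkolaRight,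
        mul_div_mul_right _ _ (right_ne_zero_of_mul hx), Real.logb_div ht hd, mul_sub]
  simp only [klDiv, hlog, Finset.sum_sub_distrib]
  rw [sum_mul_fst P fun i => Real.logb 2 (t i), sum_mul_snd P fun j => Real.logb 2 (d j), hP,
    margA_nussbaumSzkolaLeft hV hU, shannon, neg_neg]

end NussbaumSzkola

section RelativeEntropy

lemma margA_re_diag {A B : Type} [Fintype B] (X : Matrix (A × B) (A × B) ℂ) :
    margA (fun x => (X x x).re) = fun i => (ptraceB X i i).re := by
  funext i
  simp [margA, ptraceB]

lemma margB_re_diag {A B : Type} [Fintype A] (X : Matrix (A × B) (A × B) ℂ) :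
    margB (fun x => (X x x).re) = fun j => (ptraceA X j j).re := by
  funext j
  simp [margB, ptraceA]

variable {A B : Type} [Fintype A] [Fintype B] [DecidableEq A] [DecidableEq B]
  {τ V : Matrix (A × B) (A × B) ℂ} {t : A × B → ℝ} {UA : Matrix A A ℂ} {a : A → ℝ}
  {UB : Matrix B B ℂ} {b : B → ℝ}

lemma margA_margB_nussbaumSzkolaLeft (hτ : IsSpectralDecomp τ V t)
    (hA : IsSpectralDecomp (ptraceB τ) UA a) (hB : UB * UBᴴ = 1) :
    margA (margB (nussbaumSzkolaLeft V (UA ⊗ₖ UB) t)) = a := by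
  have hconj := ptraceB_conj (K := UAᴴ) (L := UBᴴ) (by rwa [conjTranspose_conjTranspose]) τ
  rw [← conjTranspose_kronecker, conjTranspose_conjTranspose, conjTranspose_conjTranspose,
    hA.conjTranspose_conj] at hconj
  rw [funext hτ.margB_nussbaumSzkolaLeft, margA_re_diag, hconj]
  simp

lemma margB_margB_nussbaumSzkolaLeft (hτ : IsSpectralDecomp τ V t) (hA : UA * UAᴴ = 1)
    (hB : IsSpectralDecomp (ptraceA τ) UB b) :
    margB (margB (nussbaumSzkolaLeft V (UA ⊗ₖ UB) t)) = b := by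
  have hconj := ptraceA_conj (K := UAᴴ) (L := UBᴴ) (by rwa [conjTranspose_conjTranspose]) τ
  rw [← conjTranspose_kronecker, conjTranspose_conjTranspose, conjTranspose_conjTranspose,
    hB.conjTranspose_conj] at hconj
  rw [funext hτ.margB_nussbaumSzkolaLeft, margB_re_diag, hconj]
  simp

lemma nussbaumSzkolaLeft_eq_zero_of_marginals (hτ : τ.PosSemidef) (hV : IsSpectralDecomp τ V t)
    (hA : IsSpectralDecomp (ptraceB τ) UA a) (hB : IsSpectralDecomp (ptraceA τ) UB b)
    (x : (A × B) × (A × B))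
    (hx : nussbaumSzkolaRight V (UA ⊗ₖ UB) (fun x => a x.1 * b x.2) x = 0) :
    nussbaumSzkolaLeft V (UA ⊗ₖ UB) t x = 0 := by
  refine nussbaumSzkolaLeft_eq_zero (hV.nonneg hτ) (fun y hy => ?_) x hx
  refine eq_zero_of_margA_mul_margB_eq_zero (margB_nussbaumSzkolaLeft_nonneg (hV.nonneg hτ)) y ?_
  rwa [margA_margB_nussbaumSzkolaLeft hV hA hB.mul_conjTranspose_self,
    margB_margB_nussbaumSzkolaLeft hV hA.mul_conjTranspose_self hB]

lemma mutInfo_eq_klDiv_nussbaumSzkola (hτ : τ.PosSemidef) (hV : IsSpectralDecomp τ V t)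
    (hA : IsSpectralDecomp (ptraceB τ) UA a) (hB : IsSpectralDecomp (ptraceA τ) UB b) :
    mutInfo τ = klDiv (nussbaumSzkolaLeft V (UA ⊗ₖ UB) t)
      (nussbaumSzkolaRight V (UA ⊗ₖ UB) fun x => a x.1 * b x.2) := by
  set r := margB (nussbaumSzkolaLeft V (UA ⊗ₖ UB) t) with hr
  have hrA : margA r = a := margA_margB_nussbaumSzkolaLeft hV hA hB.mul_conjTranspose_self
  have hrB : margB r = b := margB_margB_nussbaumSzkolaLeft hV hA.mul_conjTranspose_self hB
  have hcross := sum_mul_logb_margA_mul_margB (p := r)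
    (margB_nussbaumSzkolaLeft_nonneg (hV.nonneg hτ))
  rw [hrA, hrB] at hcross
  rw [klDiv_nussbaumSzkola hV.conjTranspose_mul_self (hA.kronecker hB).mul_conjTranspose_self
    (nussbaumSzkolaLeft_eq_zero_of_marginals hτ hV hA hB), ← hr, hcross, mutInfo, hA.vnEntropy_eq,
    hB.vnEntropy_eq, hV.vnEntropy_eq]
  ring

end RelativeEntropy

section MeasuredDivergence

variable {n ι : Type} [Fintype n]

lemma trace_mul_nonneg {X Y : Matrix n n ℂ} (hX : X.PosSemidef) (hY : Y.PosSemidef) :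
    0 ≤ (X * Y).trace := by
  classical
  obtain ⟨U, t, hU⟩ := exists_isSpectralDecomp hY.isHermitian
  rw [hU.eq_conj, trace_mul_conj]
  refine Finset.sum_nonneg fun i _ => ?_
  rw [diag_apply, mul_diagonal]
  exact mul_nonneg (hX.conjTranspose_mul_mul_same U).diag_nonneg
    (Complex.zero_le_real.2 (hU.nonneg hY i))

lemma re_trace_mul_nonneg {X Y : Matrix n n ℂ} (hX : X.PosSemidef) (hY : Y.PosSemidef) :
    0 ≤ (X * Y).trace.re :=
  (Complex.nonneg_iff.1 (trace_mul_nonneg hX hY)).1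

variable [DecidableEq n]

lemma trace_conjTranspose_conj {m R : Type*} [Fintype m] [CommSemiring R] [StarRing R]
    {U : Matrix n m R} (hU : U * Uᴴ = 1) (X : Matrix n n R) :
    (Uᴴ * X * U).trace = X.trace := by
  rw [trace_mul_cycle, hU, Matrix.one_mul]

lemma re_trace_conjTranspose_mul_diagonal_mul_s7 (t : n → ℝ) (X Y : Matrix n n ℂ) :
    (Xᴴ * diagonal (fun i => (t i : ℂ)) * Y).trace.re =
      ∑ x : n × n, t x.1 * (star (X x.1 x.2) * Y x.1 x.2).re := by
  rw [trace, Complex.re_sum, Fintype.sum_prod_type_right]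
  refine Finset.sum_congr rfl fun j _ => ?_
  rw [diag_apply, mul_apply, Complex.re_sum]
  refine Finset.sum_congr rfl fun i _ => ?_
  rw [mul_diagonal, conjTranspose_apply, mul_right_comm, mul_comm, Complex.re_ofReal_mul]

lemma re_trace_mul_diagonal_mul_conjTranspose (d : n → ℝ) (X : Matrix n n ℂ) :
    (X * diagonal (fun i => (d i : ℂ)) * Xᴴ).trace.re =
      ∑ x : n × n, d x.2 * Complex.normSq (X x.1 x.2) := by
  rw [trace, Complex.re_sum, Fintype.sum_prod_type]
  refine Finset.sum_congr rfl fun i _ => ?_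
  rw [diag_apply, mul_apply, Complex.re_sum]
  refine Finset.sum_congr rfl fun j _ => ?_
  rw [mul_diagonal, conjTranspose_apply, mul_right_comm, mul_comm, Complex.re_ofReal_mul,
    Complex.star_def, Complex.mul_conj, Complex.ofReal_re]

lemma two_mul_re_sub_le_sq_div {t d s : ℝ} (ht : 0 ≤ t) (hd : 0 ≤ d) (hs : 0 < s) (z w : ℂ) :
    2 * (t * (star z * w).re) - d * Complex.normSq z - s * (t * Complex.normSq z) ≤
      (t * Complex.normSq w) ^ 2 / (d * Complex.normSq w + s * (t * Complex.normSq w)) := by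
  have hz := Complex.normSq_nonneg z
  rcases eq_or_ne w 0 with rfl | hw
  · simp only [mul_zero, Complex.zero_re, map_zero, zero_pow two_ne_zero, zero_div]
    linarith [mul_nonneg hd hz, mul_nonneg hs.le (mul_nonneg ht hz)]
  have hw' : 0 < Complex.normSq w := Complex.normSq_pos.2 hw
  have he : 0 ≤ d + s * t := by positivity
  rcases he.eq_or_lt with he | he
  · have hd0 : d = 0 := by nlinarith [mul_nonneg hs.le ht]
    have ht0 : t = 0 := by nlinarith [mul_nonneg hs.le ht]
    simp [hd0, ht0]
  have hsq : 0 ≤ Complex.normSq ((d + s * t : ℝ) * z - (t : ℝ) * w) := Complex.normSq_nonneg _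
  have hrhs : (t * Complex.normSq w) ^ 2 / (d * Complex.normSq w + s * (t * Complex.normSq w)) =
      t ^ 2 * Complex.normSq w / (d + s * t) := by
    field_simp
  rw [hrhs, le_div_iff₀ he]
  simp only [Complex.normSq_apply, Complex.sub_re, Complex.sub_im, Complex.mul_re, Complex.mul_im,
    Complex.ofReal_re, Complex.ofReal_im, Complex.star_def, Complex.conj_re, Complex.conj_im]
    at hsq ⊢
  linarith

lemma two_mul_re_trace_sub_le_sum_sq_div {τ σ V U : Matrix n n ℂ} {t d : n → ℝ}
    (hτ : τ.PosSemidef) (hσ : σ.PosSemidef) (hV : IsSpectralDecomp τ V t)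
    (hU : IsSpectralDecomp σ U d) (X : Matrix n n ℂ) {s : ℝ} (hs : 0 < s) :
    2 * (Xᴴ * τ).trace.re - (X * σ * Xᴴ).trace.re - s * (Xᴴ * τ * X).trace.re ≤
      ∑ x, nussbaumSzkolaLeft V U t x ^ 2 /
        (nussbaumSzkolaRight V U d x + s * nussbaumSzkolaLeft V U t x) := by
  set Z := Vᴴ * X * U with hZ
  have hZH : Zᴴ = Uᴴ * Xᴴ * V := by
    simp only [hZ, conjTranspose_mul, conjTranspose_conjTranspose, Matrix.mul_assoc]
  have hlin : (Xᴴ * τ).trace = (Zᴴ * diagonal (fun i => (t i : ℂ)) * (Vᴴ * U)).trace := by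
    rw [← trace_conjTranspose_conj hU.mul_conjTranspose_self, hZH, hV.eq_conj]
    simp only [Matrix.mul_assoc]
  have hright : (X * σ * Xᴴ).trace = (Z * diagonal (fun i => (d i : ℂ)) * Zᴴ).trace := by
    rw [← trace_conjTranspose_conj hV.mul_conjTranspose_self, hZH, hU.eq_conj]
    simp only [hZ, Matrix.mul_assoc]
  have hleft : (Xᴴ * τ * X).trace = (Zᴴ * diagonal (fun i => (t i : ℂ)) * Z).trace := by
    rw [← trace_conjTranspose_conj hU.mul_conjTranspose_self, hZH, hV.eq_conj]
    simp only [hZ, Matrix.mul_assoc]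
  rw [hlin, hright, hleft, re_trace_conjTranspose_mul_diagonal_mul_s7,
    re_trace_mul_diagonal_mul_conjTranspose, re_trace_conjTranspose_mul_diagonal_mul_s7,
    Finset.mul_sum, Finset.mul_sum, ← Finset.sum_sub_distrib, ← Finset.sum_sub_distrib]
  refine Finset.sum_le_sum fun x _ => ?_
  have hnorm : (star (Z x.1 x.2) * Z x.1 x.2).re = Complex.normSq (Z x.1 x.2) := by
    rw [Complex.star_def, ← Complex.normSq_eq_conj_mul_self, Complex.ofReal_re]
  rw [hnorm]
  exact two_mul_re_sub_le_sq_div (hV.nonneg hτ _) (hU.nonneg hσ _) hs _ _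

namespace IsPOVM

variable [Fintype ι] {E : ι → Matrix n n ℂ}

lemma sum_re_trace_mul (hE : IsPOVM E) (τ : Matrix n n ℂ) :
    ∑ i, (E i * τ).trace.re = τ.trace.re := by
  rw [← Complex.re_sum, ← trace_sum, ← Finset.sum_mul, hE.2, Matrix.one_mul]

lemma isHermitian_sum_smul (hE : IsPOVM E) (c : ι → ℝ) : (∑ i, (c i : ℂ) • E i).IsHermitian := by
  simp [IsHermitian, conjTranspose_sum, (hE.1 _).isHermitian.eq]

-- The operator variance `∑ i, (X - c i) * E i * (X - c i)` of the outcome `c` is positive.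
lemma re_trace_sq_le (hE : IsPOVM E) (c : ι → ℝ) {τ : Matrix n n ℂ} (hτ : τ.PosSemidef) :
    ((∑ i, (c i : ℂ) • E i) * (∑ i, (c i : ℂ) • E i) * τ).trace.re ≤
      ∑ i, c i ^ 2 * (E i * τ).trace.re := by
  set X := ∑ i, (c i : ℂ) • E i with hX
  have hXH : Xᴴ = X := hE.isHermitian_sum_smul c
  have hvar : ∑ i, (X - (c i : ℂ) • 1)ᴴ * E i * (X - (c i : ℂ) • 1) =
      ∑ i, ((c i ^ 2 : ℝ) : ℂ) • E i - X * X := by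
    have hterm : ∀ i, (X - (c i : ℂ) • 1)ᴴ * E i * (X - (c i : ℂ) • 1) =
        X * E i * X - X * ((c i : ℂ) • E i) - ((c i : ℂ) • E i) * X +
          ((c i ^ 2 : ℝ) : ℂ) • E i := fun i => by
      rw [conjTranspose_sub, conjTranspose_smul, conjTranspose_one, hXH, Complex.star_def,
        Complex.conj_ofReal]
      simp only [Matrix.mul_sub, Matrix.sub_mul, Matrix.smul_mul, Matrix.mul_smul, Matrix.one_mul,
        Matrix.mul_one, smul_sub, smul_smul, Complex.ofReal_mul, sq]
      abel
    simp only [hterm, Finset.sum_add_distrib, Finset.sum_sub_distrib, ← Finset.mul_sum,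
      ← Finset.sum_mul, hE.2, ← hX, Matrix.mul_one]
    abel
  have hnonneg := re_trace_mul_nonneg
    (posSemidef_sum Finset.univ fun i _ => (hE.1 i).conjTranspose_mul_mul_same (X - (c i : ℂ) • 1))
    hτ
  rw [hvar, Matrix.sub_mul, trace_sub, Complex.sub_re, Finset.sum_mul, trace_sum,
    Complex.re_sum] at hnonneg
  simpa only [smul_mul_assoc, trace_smul, smul_eq_mul, Complex.re_ofReal_mul, sub_nonneg]
    using hnonneg

variable {τ σ V U : Matrix n n ℂ} {t d : n → ℝ}

-- With `X = ∑ c i • E i` in `two_mul_re_trace_sub_le_sum_sq_div`, the coefficients `c` are those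
-- that would be optimal if `X * X` were `∑ c i ^ 2 • E i`.
lemma sum_sq_div_le (hE : IsPOVM E) (hτ : τ.PosSemidef) (hσ : σ.PosSemidef)
    (hV : IsSpectralDecomp τ V t) (hU : IsSpectralDecomp σ U d) {s : ℝ} (hs : 0 < s) :
    ∑ i, (E i * τ).trace.re ^ 2 / ((E i * σ).trace.re + s * (E i * τ).trace.re) ≤
      ∑ x, nussbaumSzkolaLeft V U t x ^ 2 /
        (nussbaumSzkolaRight V U d x + s * nussbaumSzkolaLeft V U t x) := by
  set p := fun i => (E i * τ).trace.re
  set q := fun i => (E i * σ).trace.re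
  have hp : ∀ i, 0 ≤ p i := fun i => re_trace_mul_nonneg (hE.1 i) hτ
  have hq : ∀ i, 0 ≤ q i := fun i => re_trace_mul_nonneg (hE.1 i) hσ
  set c := fun i => p i / (q i + s * p i) with hc
  set X := ∑ i, (c i : ℂ) • E i with hX
  have hXH : Xᴴ = X := hE.isHermitian_sum_smul c
  have hlin : (Xᴴ * τ).trace.re = ∑ i, c i * p i := by
    rw [hXH, hX, Finset.sum_mul, trace_sum, Complex.re_sum]
    simp only [smul_mul_assoc, trace_smul, smul_eq_mul, Complex.re_ofReal_mul, p]
  have hright : (X * σ * Xᴴ).trace.re ≤ ∑ i, c i ^ 2 * q i := by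
    rw [hXH, trace_mul_cycle]
    exact hE.re_trace_sq_le c hσ
  have hleft : (Xᴴ * τ * X).trace.re ≤ ∑ i, c i ^ 2 * p i := by
    rw [hXH, trace_mul_cycle]
    exact hE.re_trace_sq_le c hτ
  have hmax : ∀ i, p i ^ 2 / (q i + s * p i) =
      2 * (c i * p i) - c i ^ 2 * q i - s * (c i ^ 2 * p i) := fun i => by
    rcases (add_nonneg (hq i) (mul_nonneg hs.le (hp i))).eq_or_lt with he | he
    · simp [hc, ← he]
    · have hce : c i * (q i + s * p i) = p i := div_mul_cancel₀ _ he.ne'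
      rw [sq, mul_div_assoc]
      linear_combination c i * hce
  calc ∑ i, p i ^ 2 / (q i + s * p i)
      = 2 * (∑ i, c i * p i) - (∑ i, c i ^ 2 * q i) - s * ∑ i, c i ^ 2 * p i := by
        simp only [hmax, Finset.sum_sub_distrib, Finset.mul_sum]
    _ ≤ 2 * (Xᴴ * τ).trace.re - (X * σ * Xᴴ).trace.re - s * (Xᴴ * τ * X).trace.re := by
        rw [hlin]
        gcongr
    _ ≤ _ := two_mul_re_trace_sub_le_sum_sq_div hτ hσ hV hU X hs

theorem klDiv_le_klDiv_nussbaumSzkola (hE : IsPOVM E) (hτ : τ.PosSemidef) (hσ : σ.PosSemidef)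
    (hV : IsSpectralDecomp τ V t) (hU : IsSpectralDecomp σ U d)
    (hac : ∀ x, nussbaumSzkolaRight V U d x = 0 → nussbaumSzkolaLeft V U t x = 0) :
    klDiv (fun i => (E i * τ).trace.re) (fun i => (E i * σ).trace.re) ≤
      klDiv (nussbaumSzkolaLeft V U t) (nussbaumSzkolaRight V U d) := by
  refine klDiv_le_klDiv_of_sum_sq_div_le (fun i => re_trace_mul_nonneg (hE.1 i) hτ)
    (fun i => re_trace_mul_nonneg (hE.1 i) hσ) (nussbaumSzkolaLeft_nonneg (hV.nonneg hτ))
    (nussbaumSzkolaRight_nonneg (hU.nonneg hσ)) hac ?_ fun s hs => hE.sum_sq_div_le hτ hσ hV hU hs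
  have hmarg := margA_nussbaumSzkolaLeft (t := t) hV.conjTranspose_mul_self
    hU.mul_conjTranspose_self
  rw [hE.sum_re_trace_mul, hV.re_trace, Fintype.sum_prod_type]
  exact Finset.sum_congr rfl fun i _ => (congrFun hmarg i).symm

end IsPOVM

end MeasuredDivergence

section LocalMeasurement

variable {A B ι κ : Type} [Fintype A] [Fintype B] {M : ι → Matrix A A ℂ} {N : κ → Matrix B B ℂ}

lemma IsPOVM.margA_measProb [Fintype κ] [DecidableEq B] (hN : IsPOVM N)
    (τ : Matrix (A × B) (A × B) ℂ) :
    margA (measProb M N τ) = fun i => (M i * ptraceB τ).trace.re := by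
  funext i
  have hsum : ∑ j, M i ⊗ₖ N j = M i ⊗ₖ 1 := by
    rw [← hN.2]
    ext
    simp [Matrix.sum_apply, Finset.mul_sum]
  rw [← trace_kronecker_one_mul, ← hsum, Finset.sum_mul, trace_sum, Complex.re_sum]
  rfl

lemma IsPOVM.margB_measProb [Fintype ι] [DecidableEq A] (hM : IsPOVM M)
    (τ : Matrix (A × B) (A × B) ℂ) :
    margB (measProb M N τ) = fun j => (N j * ptraceA τ).trace.re := by
  funext j
  have hsum : ∑ i, M i ⊗ₖ N j = 1 ⊗ₖ N j := by
    rw [← hM.2]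
    ext
    simp [Matrix.sum_apply, Finset.sum_mul]
  rw [← trace_one_kronecker_mul, ← hsum, Finset.sum_mul, trace_sum, Complex.re_sum]
  rfl

variable [Fintype ι] [Fintype κ] [DecidableEq A] [DecidableEq B]

lemma IsPOVM.kronecker (hM : IsPOVM M) (hN : IsPOVM N) :
    IsPOVM fun x : ι × κ => M x.1 ⊗ₖ N x.2 := by
  refine ⟨fun x => (hM.1 x.1).kronecker (hN.1 x.2), ?_⟩
  rw [← one_kronecker_one, ← hM.2, ← hN.2]
  ext x y
  simp [Matrix.sum_apply, Fintype.sum_prod_type, Finset.sum_mul_sum]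

theorem IsPOVM.classMI_measProb_le_mutInfo (hM : IsPOVM M) (hN : IsPOVM N)
    {τ : Matrix (A × B) (A × B) ℂ} (hτ : τ.PosSemidef) :
    classMI (measProb M N τ) ≤ mutInfo τ := by
  have hA := ptraceB_posSemidef hτ
  have hB := ptraceA_posSemidef hτ
  obtain ⟨V, t, hV⟩ := exists_isSpectralDecomp hτ.isHermitian
  obtain ⟨UA, a, hUA⟩ := exists_isSpectralDecomp hA.isHermitian
  obtain ⟨UB, b, hUB⟩ := exists_isSpectralDecomp hB.isHermitian
  have hE := hM.kronecker hN
  have hprod : (fun x : ι × κ => margA (measProb M N τ) x.1 * margB (measProb M N τ) x.2) =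
      fun x => ((M x.1 ⊗ₖ N x.2) * (ptraceB τ ⊗ₖ ptraceA τ)).trace.re := by
    funext x
    have him : 0 = (M x.1 * ptraceB τ).trace.im :=
      (Complex.nonneg_iff.1 (trace_mul_nonneg (hM.1 x.1) hA)).2
    rw [hN.margA_measProb, hM.margB_measProb, ← mul_kronecker_mul, trace_kronecker,
      Complex.mul_re, ← him, zero_mul, sub_zero]
  rw [classMI_eq_klDiv (p := measProb M N τ) fun x => re_trace_mul_nonneg (hE.1 x) hτ,
    hprod, mutInfo_eq_klDiv_nussbaumSzkola hτ hV hUA hUB]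
  exact hE.klDiv_le_klDiv_nussbaumSzkola hτ (hA.kronecker hB) hV (hUA.kronecker hUB)
    (nussbaumSzkolaLeft_eq_zero_of_marginals hτ hV hUA hUB)

end LocalMeasurement

section ColumnMeasurement

variable {I J : Type} [Fintype I] [Fintype J] [DecidableEq I] [DecidableEq J]

/-- The rank-one operator `u uᴴ` of the `i`-th column `u` of `U`; for unitary `U` these are the
effects of the measurement in the orthonormal basis of columns. -/
def columnProj (U : Matrix I I ℂ) (i : I) : Matrix I I ℂ := U * Matrix.single i i 1 * Uᴴ

lemma isPOVM_columnProj {U : Matrix I I ℂ} (hU : U * Uᴴ = 1) : IsPOVM (columnProj U) := by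
  have hsum : ∑ i : I, Matrix.single i i (1 : ℂ) = 1 := by
    rw [sum_single_eq_diagonal, diagonal_one]
  refine ⟨fun i => ?_, ?_⟩
  · have hsingle : (Matrix.single i i (1 : ℂ)).PosSemidef := by
      rw [← diagonal_single, posSemidef_diagonal_iff]
      exact Pi.single_nonneg.2 zero_le_one
    exact hsingle.mul_mul_conjTranspose_same U
  · simp only [columnProj]
    rw [← Finset.sum_mul, ← Finset.mul_sum, hsum, Matrix.mul_one, hU]

lemma measProb_columnProj {UA : Matrix I I ℂ} {UB : Matrix J J ℂ} (hA : UAᴴ * UA = 1)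
    (hB : UBᴴ * UB = 1) (p : I × J → ℝ) :
    measProb (columnProj UA) (columnProj UB)
      ((UA ⊗ₖ UB) * diagonal (fun x => (p x : ℂ)) * (UA ⊗ₖ UB)ᴴ) = p := by
  have hU := conjTranspose_kronecker_mul_self hA hB
  funext x
  have hproj : columnProj UA x.1 ⊗ₖ columnProj UB x.2 =
      (UA ⊗ₖ UB) * Matrix.single x x 1 * (UA ⊗ₖ UB)ᴴ := by
    simp only [columnProj, mul_kronecker_mul, conjTranspose_kronecker,
      single_kronecker_single, mul_one, Prod.mk.eta]
  have hcancel : (UA ⊗ₖ UB)ᴴ * ((UA ⊗ₖ UB) * Matrix.single x x 1 * (UA ⊗ₖ UB)ᴴ) * (UA ⊗ₖ UB) =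
      Matrix.single x x 1 := by
    rw [← Matrix.mul_assoc, ← Matrix.mul_assoc, hU, Matrix.one_mul, Matrix.mul_assoc, hU,
      Matrix.mul_one]
  rw [measProb, hproj, trace_mul_conj, hcancel, trace_single_mul]
  simp

end ColumnMeasurement

section Copies

variable {A B ι κ : Type} {n : ℕ}

/-- Separates the `k`-th copy of `A` and `B` from the remaining ones. -/
def copyEquiv (k : Fin n) :
    (A × B) × (({j // j ≠ k} → A) × ({j // j ≠ k} → B)) ≃ (Fin n → A) × (Fin n → B) :=
  (Equiv.prodProdProdComm A B _ _).trans
    ((Equiv.funSplitAt k A).symm.prodCongr (Equiv.funSplitAt k B).symm)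

lemma copyEquiv_apply_self (k : Fin n) (z : (A × B) × (({j // j ≠ k} → A) × ({j // j ≠ k} → B))) :
    ((copyEquiv k z).1 k, (copyEquiv k z).2 k) = z.1 := by
  simp [copyEquiv]

lemma copyEquiv_update (k : Fin n) (z : (A × B) × (({j // j ≠ k} → A) × ({j // j ≠ k} → B)))
    (y : A × B) :
    (Function.update (copyEquiv k z).1 k y.1, Function.update (copyEquiv k z).2 k y.2) =
      copyEquiv k (y, z.2) := by
  ext j <;> by_cases h : j = k <;> simp [copyEquiv, h]

variable [Fintype A] [Fintype B] [DecidableEq A] [DecidableEq B]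

lemma copyMarginal_eq_ptraceB (τ : Matrix ((Fin n → A) × (Fin n → B)) ((Fin n → A) × (Fin n → B)) ℂ)
    (k : Fin n) : copyMarginal τ k = ptraceB (τ.submatrix (copyEquiv k) (copyEquiv k)) := by
  ext x y
  have hterm : ∀ z : (A × B) × (({j // j ≠ k} → A) × ({j // j ≠ k} → B)),
      (if (copyEquiv k z).1 k = x.1 ∧ (copyEquiv k z).2 k = x.2 then
        τ (copyEquiv k z) (Function.update (copyEquiv k z).1 k y.1,
          Function.update (copyEquiv k z).2 k y.2) else 0) =
      if z.1 = x then τ (copyEquiv k z) (copyEquiv k (y, z.2)) else 0 := fun z => by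
    simp only [copyEquiv_update, ← copyEquiv_apply_self k z, Prod.ext_iff]
  rw [copyMarginal, of_apply, ← Fintype.sum_prod_type', ← (copyEquiv k).sum_comp]
  simp only [hterm, Fintype.sum_prod_type fun _ : (A × B) × _ => ite _ _ _, Finset.sum_ite_irrel,
    Finset.sum_const_zero, Finset.sum_ite_eq', Finset.mem_univ, if_true]
  rfl

/-- The operator `X` acting on the `k`-th of `n` tensor factors. -/
def copyEmbed (k : Fin n) (X : Matrix A A ℂ) : Matrix (Fin n → A) (Fin n → A) ℂ :=
  (X ⊗ₖ (1 : Matrix ({j // j ≠ k} → A) ({j // j ≠ k} → A) ℂ)).submatrix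
    (Equiv.funSplitAt k A) (Equiv.funSplitAt k A)

lemma isPOVM_copyEmbed [Fintype ι] {M : ι → Matrix A A ℂ} (hM : IsPOVM M) (k : Fin n) :
    IsPOVM fun i => copyEmbed k (M i) := by
  refine ⟨fun i => ((hM.1 i).kronecker PosSemidef.one).submatrix _, ?_⟩
  have hsum : ∑ i, copyEmbed k (M i) = copyEmbed k (∑ i, M i) := by
    ext f g
    simp [copyEmbed, Matrix.sum_apply, Finset.sum_mul]
  rw [hsum, hM.2, copyEmbed, one_kronecker_one, submatrix_one_equiv]

lemma measProb_copyEmbed (M : ι → Matrix A A ℂ) (N : κ → Matrix B B ℂ)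
    (τ : Matrix ((Fin n → A) × (Fin n → B)) ((Fin n → A) × (Fin n → B)) ℂ) (k : Fin n) :
    measProb (fun i => copyEmbed k (M i)) (fun j => copyEmbed k (N j)) τ =
      measProb M N (copyMarginal τ k) := by
  funext x
  have hsub : (copyEmbed k (M x.1) ⊗ₖ copyEmbed k (N x.2)).submatrix (copyEquiv k) (copyEquiv k) =
      (M x.1 ⊗ₖ N x.2) ⊗ₖ 1 := by
    ext y z
    have hone : (1 : Matrix (({j // j ≠ k} → A) × ({j // j ≠ k} → B)) _ ℂ) y.2 z.2 =
        (1 : Matrix _ _ ℂ) y.2.1 z.2.1 * (1 : Matrix _ _ ℂ) y.2.2 z.2.2 := by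
      rw [← one_kronecker_one, kroneckerMap_apply]
    simp [copyEmbed, copyEquiv, hone, mul_mul_mul_comm]
  rw [measProb, measProb, copyMarginal_eq_ptraceB, ← trace_kronecker_one_mul, ← hsub,
    submatrix_mul_equiv]
  exact congrArg Complex.re ((copyEquiv k).sum_comp _).symm

theorem classMI_measProb_copyMarginal_le_mutInfo [Fintype ι] [Fintype κ] {M : ι → Matrix A A ℂ}
    {N : κ → Matrix B B ℂ} (hM : IsPOVM M) (hN : IsPOVM N)
    {τ : Matrix ((Fin n → A) × (Fin n → B)) ((Fin n → A) × (Fin n → B)) ℂ} (hτ : τ.PosSemidef)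
    (k : Fin n) : classMI (measProb M N (copyMarginal τ k)) ≤ mutInfo τ := by
  rw [← measProb_copyEmbed]
  exact (isPOVM_copyEmbed hM k).classMI_measProb_le_mutInfo (isPOVM_copyEmbed hN k) hτ

end Copies

section Broadcast

variable {I J K κ : Type} [Fintype κ]

/-- The map sending the `j`-th basis vector to the `κ`-fold tensor power of the `j`-th column of
`U`: for unitary `U` it clones the orthonormal basis of columns. -/
def cloneColumns (κ : Type) [Fintype κ] (U : Matrix I J ℂ) : Matrix (κ → I) J ℂ :=
  Matrix.of fun f j => ∏ l, U (f l) j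

lemma conjTranspose_cloneColumns_mul_self_apply [Fintype I] [DecidableEq κ] (U : Matrix I J ℂ)
    (i j : J) :
    ((cloneColumns κ U)ᴴ * cloneColumns κ U) i j = (Uᴴ * U) i j ^ Fintype.card κ := by
  simp only [mul_apply, cloneColumns, conjTranspose_apply, of_apply, star_prod,
    ← Finset.prod_mul_distrib]
  rw [← Fintype.prod_sum fun (_ : κ) a => star (U a i) * U a j, Finset.prod_const,
    Finset.card_univ]

lemma conjTranspose_cloneColumns_mul_self [Fintype I] [DecidableEq J] [DecidableEq κ] [Nonempty κ]
    {U : Matrix I J ℂ} (hU : Uᴴ * U = 1) : (cloneColumns κ U)ᴴ * cloneColumns κ U = 1 := by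
  ext i j
  rw [conjTranspose_cloneColumns_mul_self_apply, hU]
  obtain rfl | h := eq_or_ne i j
  · rw [one_apply_eq, one_pow]
  · rw [one_apply_ne h, zero_pow Fintype.card_ne_zero]

lemma ptraceB_khatriRao_conj_diagonal [Fintype J] [Fintype K] [DecidableEq J] {V : Matrix I J ℂ}
    {R : Matrix K J ℂ} (hR : ∀ j, (Rᴴ * R) j j = 1) (p : J → ℝ) :
    ptraceB ((of fun x j => V x.1 j * R x.2 j) * diagonal (fun j => (p j : ℂ)) *
      (of fun (x : I × K) j => V x.1 j * R x.2 j)ᴴ) = V * diagonal (fun j => (p j : ℂ)) * Vᴴ := by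
  ext a a'
  have hR' : ∀ j, ∑ x, R x j * star (R x j) = 1 := fun j => by
    simpa only [mul_apply, conjTranspose_apply, mul_comm (star _)] using hR j
  simp only [ptraceB, of_apply, mul_apply (M := _ * diagonal _), mul_diagonal, conjTranspose_apply,
    star_mul']
  rw [Finset.sum_comm]
  refine Finset.sum_congr rfl fun j _ => ?_
  rw [← mul_one (_ * star _), ← hR' j, Finset.mul_sum]
  exact Finset.sum_congr rfl fun x _ => by ring

variable {n : ℕ}

lemma submatrix_cloneColumns_kronecker (UA : Matrix I I ℂ) (UB : Matrix J J ℂ) (k : Fin n) :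
    (cloneColumns (Fin n) UA ⊗ₖ cloneColumns (Fin n) UB).submatrix (copyEquiv k) id =
      of fun x i => (UA ⊗ₖ UB) x.1 i *
        (cloneColumns {j // j ≠ k} UA ⊗ₖ cloneColumns {j // j ≠ k} UB) x.2 i := by
  ext x i
  have hother : ∀ l : {j // j ≠ k}, (l : Fin n) ≠ k := Subtype.prop
  simp [copyEquiv, cloneColumns, Fintype.prod_eq_mul_prod_subtype_ne _ k, hother, mul_mul_mul_comm]

variable [Fintype I] [Fintype J] [DecidableEq I] [DecidableEq J]

lemma copyMarginal_cloneColumns_conj_diagonal {UA : Matrix I I ℂ} {UB : Matrix J J ℂ}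
    (hA : UAᴴ * UA = 1) (hB : UBᴴ * UB = 1) (p : I × J → ℝ) (k : Fin n) :
    copyMarginal ((cloneColumns (Fin n) UA ⊗ₖ cloneColumns (Fin n) UB) *
      diagonal (fun x => (p x : ℂ)) * (cloneColumns (Fin n) UA ⊗ₖ cloneColumns (Fin n) UB)ᴴ) k =
      (UA ⊗ₖ UB) * diagonal (fun x => (p x : ℂ)) * (UA ⊗ₖ UB)ᴴ := by
  have hunit : ∀ i, ((cloneColumns {j // j ≠ k} UA ⊗ₖ cloneColumns {j // j ≠ k} UB)ᴴ *
      (cloneColumns {j // j ≠ k} UA ⊗ₖ cloneColumns {j // j ≠ k} UB)) i i = 1 := fun i => by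
    rw [conjTranspose_kronecker, ← mul_kronecker_mul, kroneckerMap_apply,
      conjTranspose_cloneColumns_mul_self_apply, conjTranspose_cloneColumns_mul_self_apply, hA, hB,
      one_apply_eq, one_apply_eq, one_pow, one_mul]
  rw [copyMarginal_eq_ptraceB, ← ptraceB_khatriRao_conj_diagonal (V := UA ⊗ₖ UB) hunit,
    ← submatrix_cloneColumns_kronecker]
  rfl

lemma isDensity_conj_diagonal {K : Matrix κ J ℂ} (hK : Kᴴ * K = 1) {p : J → ℝ} (hp : IsProbDist p) :
    IsDensity (K * diagonal (fun x => (p x : ℂ)) * Kᴴ) := by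
  refine ⟨PosSemidef.mul_mul_conjTranspose_same ?_ K, ?_⟩
  · exact posSemidef_diagonal_iff.2 fun x => Complex.zero_le_real.2 (hp.1 x)
  · rw [trace_mul_cycle, hK, Matrix.one_mul, trace_diagonal, ← Complex.ofReal_sum, hp.2,
      Complex.ofReal_one]

lemma isBroadcast_cloneColumns [Nonempty (Fin n)] {UA : Matrix I I ℂ} {UB : Matrix J J ℂ}
    (hA : UAᴴ * UA = 1) (hB : UBᴴ * UB = 1) {p : I × J → ℝ} (hp : IsProbDist p) :
    IsBroadcast n ((cloneColumns (Fin n) UA ⊗ₖ cloneColumns (Fin n) UB) *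
      diagonal (fun x => (p x : ℂ)) * (cloneColumns (Fin n) UA ⊗ₖ cloneColumns (Fin n) UB)ᴴ)
      ((UA ⊗ₖ UB) * diagonal (fun x => (p x : ℂ)) * (UA ⊗ₖ UB)ᴴ) :=
  ⟨isDensity_conj_diagonal (conjTranspose_kronecker_mul_self
      (conjTranspose_cloneColumns_mul_self hA) (conjTranspose_cloneColumns_mul_self hB)) hp,
    copyMarginal_cloneColumns_conj_diagonal hA hB p⟩

end Broadcast

/-- for a classical-classical state ρ, (I_b)_n(ρ) = I(ρ): some
n-copy broadcast state attains I(ρ), and no broadcast copy achieves less. -/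
theorem stmt_7 {I J : Type} [Fintype I] [Fintype J] [DecidableEq I] [DecidableEq J]
    (p : I × J → ℝ) (hp : IsProbDist p)
    (UA : Matrix I I ℂ) (UB : Matrix J J ℂ)
    (hUA : UA ∈ Matrix.unitaryGroup I ℂ) (hUB : UB ∈ Matrix.unitaryGroup J ℂ)
    (ρ : Matrix (I × J) (I × J) ℂ)
    (hρ : ρ = (UA ⊗ₖ UB) * Matrix.diagonal (fun x => (p x : ℂ)) * (UA ⊗ₖ UB)ᴴ)
    (n : ℕ) (hn : 1 ≤ n) :
    (∃ τ, IsBroadcast n τ ρ ∧ mutInfo τ = mutInfo ρ) ∧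
    (∀ τ, IsBroadcast n τ ρ → mutInfo ρ ≤ mutInfo τ) ∧
    Ib n ρ = mutInfo ρ := by
  have hA : UAᴴ * UA = 1 := mem_unitaryGroup_iff'.1 hUA
  have hB : UBᴴ * UB = 1 := mem_unitaryGroup_iff'.1 hUB
  have : Nonempty (Fin n) := ⟨⟨0, hn⟩⟩
  have hmutInfo : mutInfo ρ = classMI p := by rw [hρ, mutInfo_conj_diagonal hA hB]
  have attained : ∃ τ, IsBroadcast n τ ρ ∧ mutInfo τ = mutInfo ρ := by
    refine ⟨_, hρ ▸ isBroadcast_cloneColumns hA hB hp, ?_⟩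
    rw [hmutInfo, mutInfo_conj_diagonal (conjTranspose_cloneColumns_mul_self hA)
      (conjTranspose_cloneColumns_mul_self hB)]
  have minimal : ∀ τ, IsBroadcast n τ ρ → mutInfo ρ ≤ mutInfo τ := by
    rintro τ ⟨⟨hτ, -⟩, hcopy⟩
    rw [hmutInfo, ← measProb_columnProj hA hB p, ← hρ, ← hcopy ⟨0, hn⟩]
    exact classMI_measProb_copyMarginal_le_mutInfo
      (isPOVM_columnProj (mem_unitaryGroup_iff.1 hUA))
      (isPOVM_columnProj (mem_unitaryGroup_iff.1 hUB)) hτ _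
  have hleast : IsLeast {x | ∃ τ, IsBroadcast n τ ρ ∧ x = mutInfo τ} (mutInfo ρ) :=
    ⟨attained.imp fun _ h => ⟨h.1, h.2.symm⟩, by rintro _ ⟨τ, hτ, rfl⟩; exact minimal τ hτ⟩
  exact ⟨attained, minimal, hleast.csInf_eq⟩

end
end
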